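/- arXiv:2406.09536 — 4 statements merged into one kernel-verified Lean document; each statement's English description precedes it below -/
import Mathlib

section
/- There exists a probability density f on [-1,1]², continuous and positive almost everywhere, with Q1p = Q1m = Q2p = Q2m = 1/2, such that for every odd integer n ≥ 3 the equilibrium system has at least two distinct non-trivial solutions; in particular the non-trivial solution of the equilibrium system is not necessarily unique. -/
/-!
When all four half-square masses are `1/2`, the factors `K1, K2, L1, L2` are equal, so the system
only involves the sector masses `Ii(θi)`, and `n` disappears (`eqSysV_of_ratios`). Inside each
quadrant the mass of the sector below slope `s` can be prescribed as an increasing function of `s`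
at finitely many slopes: a sum of suitably normalised bumps on consecutive cones is continuous and
positive almost everywhere (`exists_bump`, `exists_profile`). One may therefore choose two
solutions first and then find a density realising both, as long as the required sector masses are
compatible with monotonicity in each quadrant.

Both solutions are sought symmetric under the reflection in the diagonal `x = y`, so that
`θ5 = θ1`, `θ6 = θ4`, `θ7 = θ3`, `θ8 = θ2`. With `mi` the mass of the `i`-th sector, the system reads
`tan θ1 = (m3 + m4) / (m2 + m3)`, `tan θ2 = (m1 + m2) / (m2 + m3)`,
`tan θ3 = (m1 + m2) / (m1 + m4)`, `tan θ4 = (m3 + m4) / (m1 + m4)`.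
If `m3 < m1`, then raising `m4` alone raises `tan θ4`, which is consistent with a larger `m4` when
the density is concentrated between the two values of `θ4`; the induced changes of `m1, m2, m3` can
be kept small by making the density small near the corresponding rays. In units of `1/200`, the
masses `(30, 30, 10, 40)` and `(31, 31, 9, 55)` work, with slopes `(5/4, 3/2, 6/7, 5/7)` and
`(8/5, 31/20, 31/43, 32/43)`. The quadrants have masses `40, 60, 40, 60`, so each half-square has
mass `100/200`. The four quadrants are put together by reflections (`glue`).
-/

open MeasureTheory Real Set

noncomputable section

/-- The square `[-1,1]²`. -/
def Sq : Set (ℝ × ℝ) := Set.Icc (-1 : ℝ) 1 ×ˢ Set.Icc (-1 : ℝ) 1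

/-- A probability density supported on `[-1,1]²`, continuous and positive
almost everywhere on the square. -/
structure IsNiceDensity (f : ℝ × ℝ → ℝ) : Prop where
  nonneg : ∀ p, 0 ≤ f p
  vanish : ∀ p ∉ Sq, f p = 0
  total : (∫ p in Sq, f p) = 1
  cont : ContinuousOn f Sq
  pos_ae : ∀ᵐ p ∂(volume.restrict Sq), 0 < f p

/-- Region `R1(θ) = {0 < x ≤ 1, 0 < y < x·tan θ}`; for `θ = π/2` it is the full
open quadrant. -/
def R1 (θ : ℝ) : Set (ℝ × ℝ) :=
  {p | 0 < p.1 ∧ p.1 ≤ 1 ∧ 0 < p.2 ∧ (θ = π / 2 ∨ p.2 < p.1 * tan θ)}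

def R2 (θ : ℝ) : Set (ℝ × ℝ) :=
  {p | -1 ≤ p.1 ∧ p.1 < 0 ∧ 0 < p.2 ∧ (θ = π / 2 ∨ p.2 < -p.1 * tan θ)}

def R3 (θ : ℝ) : Set (ℝ × ℝ) :=
  {p | -1 ≤ p.1 ∧ p.1 < 0 ∧ 0 < -p.2 ∧ (θ = π / 2 ∨ -p.2 < -p.1 * tan θ)}

def R4 (θ : ℝ) : Set (ℝ × ℝ) :=
  {p | 0 < p.1 ∧ p.1 ≤ 1 ∧ 0 < -p.2 ∧ (θ = π / 2 ∨ -p.2 < p.1 * tan θ)}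

def R5 (θ : ℝ) : Set (ℝ × ℝ) :=
  {p | 0 < p.2 ∧ p.2 ≤ 1 ∧ 0 < p.1 ∧ (θ = π / 2 ∨ p.1 < p.2 * tan θ)}

def R6 (θ : ℝ) : Set (ℝ × ℝ) :=
  {p | 0 < p.2 ∧ p.2 ≤ 1 ∧ 0 < -p.1 ∧ (θ = π / 2 ∨ -p.1 < p.2 * tan θ)}

def R7 (θ : ℝ) : Set (ℝ × ℝ) :=
  {p | -1 ≤ p.2 ∧ p.2 < 0 ∧ 0 < -p.1 ∧ (θ = π / 2 ∨ -p.1 < -p.2 * tan θ)}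

def R8 (θ : ℝ) : Set (ℝ × ℝ) :=
  {p | -1 ≤ p.2 ∧ p.2 < 0 ∧ 0 < p.1 ∧ (θ = π / 2 ∨ p.1 < -p.2 * tan θ)}

def I1 (f : ℝ × ℝ → ℝ) (θ : ℝ) : ℝ := ∫ p in R1 θ, f p
def I2 (f : ℝ × ℝ → ℝ) (θ : ℝ) : ℝ := ∫ p in R2 θ, f p
def I3 (f : ℝ × ℝ → ℝ) (θ : ℝ) : ℝ := ∫ p in R3 θ, f p
def I4 (f : ℝ × ℝ → ℝ) (θ : ℝ) : ℝ := ∫ p in R4 θ, f p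
def I5 (f : ℝ × ℝ → ℝ) (θ : ℝ) : ℝ := ∫ p in R5 θ, f p
def I6 (f : ℝ × ℝ → ℝ) (θ : ℝ) : ℝ := ∫ p in R6 θ, f p
def I7 (f : ℝ × ℝ → ℝ) (θ : ℝ) : ℝ := ∫ p in R7 θ, f p
def I8 (f : ℝ × ℝ → ℝ) (θ : ℝ) : ℝ := ∫ p in R8 θ, f p

def Q1p (f : ℝ × ℝ → ℝ) : ℝ := ∫ p in {p ∈ Sq | 0 < p.1}, f p
def Q1m (f : ℝ × ℝ → ℝ) : ℝ := ∫ p in {p ∈ Sq | p.1 < 0}, f p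
def Q2p (f : ℝ × ℝ → ℝ) : ℝ := ∫ p in {p ∈ Sq | 0 < p.2}, f p
def Q2m (f : ℝ × ℝ → ℝ) : ℝ := ∫ p in {p ∈ Sq | p.2 < 0}, f p

def K1 (f : ℝ × ℝ → ℝ) (n : ℕ) : ℝ := Q1m f ^ ((n - 1) / 2) * Q1p f ^ ((n - 3) / 2)
def K2 (f : ℝ × ℝ → ℝ) (n : ℕ) : ℝ := Q1m f ^ ((n - 3) / 2) * Q1p f ^ ((n - 1) / 2)
def L1 (f : ℝ × ℝ → ℝ) (n : ℕ) : ℝ := Q2m f ^ ((n - 3) / 2) * Q2p f ^ ((n - 1) / 2)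
def L2 (f : ℝ × ℝ → ℝ) (n : ℕ) : ℝ := Q2m f ^ ((n - 1) / 2) * Q2p f ^ ((n - 3) / 2)

/-- One equation of the equilibrium system: if the denominator is nonzero then
`θ = arctan (num / den)`; if the denominator is zero and the numerator positive then
`θ = π/2`; if both vanish, no constraint is imposed. -/
def EqnHolds (θ num den : ℝ) : Prop :=
  if den = 0 then (num = 0 ∨ θ = π / 2) else θ = arctan (num / den)

/-- The equilibrium system of the vote-trading game. -/
def EqSys (f : ℝ × ℝ → ℝ) (n : ℕ) (θ1 θ2 θ3 θ4 θ5 θ6 θ7 θ8 : ℝ) : Prop :=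
  EqnHolds θ1 ((I6 f θ6 + I7 f θ7) * K1 f n) ((I7 f θ7 + I8 f θ8) * L1 f n) ∧
  EqnHolds θ2 ((I5 f θ5 + I8 f θ8) * K2 f n) ((I7 f θ7 + I8 f θ8) * L1 f n) ∧
  EqnHolds θ3 ((I5 f θ5 + I8 f θ8) * K2 f n) ((I5 f θ5 + I6 f θ6) * L2 f n) ∧
  EqnHolds θ4 ((I6 f θ6 + I7 f θ7) * K1 f n) ((I5 f θ5 + I6 f θ6) * L2 f n) ∧
  EqnHolds θ5 ((I3 f θ3 + I4 f θ4) * L2 f n) ((I2 f θ2 + I3 f θ3) * K2 f n) ∧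
  EqnHolds θ6 ((I3 f θ3 + I4 f θ4) * L2 f n) ((I1 f θ1 + I4 f θ4) * K1 f n) ∧
  EqnHolds θ7 ((I1 f θ1 + I2 f θ2) * L1 f n) ((I1 f θ1 + I4 f θ4) * K1 f n) ∧
  EqnHolds θ8 ((I1 f θ1 + I2 f θ2) * L1 f n) ((I2 f θ2 + I3 f θ3) * K2 f n)

/-- The equilibrium system, phrased for a tuple `θ : Fin 8 → ℝ`. -/
def EqSysV (f : ℝ × ℝ → ℝ) (n : ℕ) (θ : Fin 8 → ℝ) : Prop :=
  EqSys f n (θ 0) (θ 1) (θ 2) (θ 3) (θ 4) (θ 5) (θ 6) (θ 7)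

/-! ### Profiles in one quadrant -/

/-- A density piece living in the open first quadrant: it vanishes off the quadrant and is positive
almost everywhere in it. It is not cut off at the boundary of the square. -/
structure IsProfile (h : ℝ × ℝ → ℝ) : Prop where
  cont : Continuous h
  nonneg : ∀ p, 0 ≤ h p
  vanish : ∀ p : ℝ × ℝ, p.1 ≤ 0 ∨ p.2 ≤ 0 → h p = 0
  pos_ae : ∀ᵐ p : ℝ × ℝ, 0 < p.1 → 0 < p.2 → 0 < h p

/-- The mass of `h` in the part of the square cut out by the condition `P`. -/
def massOn (h : ℝ × ℝ → ℝ) (P : ℝ × ℝ → Prop) : ℝ := ∫ p in {p ∈ Sq | P p}, h p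

lemma isCompact_Sq : IsCompact Sq := isCompact_Icc.prod isCompact_Icc

lemma measurableSet_Sq : MeasurableSet Sq := isCompact_Sq.measurableSet

lemma massOn_integrable {h : ℝ × ℝ → ℝ} (hc : Continuous h) (P : ℝ × ℝ → Prop) :
    IntegrableOn h {p ∈ Sq | P p} :=
  (hc.continuousOn.integrableOn_compact isCompact_Sq).mono_set (fun _ hp => hp.1)

lemma massOn_eq {h : ℝ × ℝ → ℝ} {P : ℝ × ℝ → Prop} (hm : MeasurableSet {p | P p})
    (H : ∀ p, h p ≠ 0 → P p) : massOn h P = ∫ p in Sq, h p := by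
  unfold massOn
  rw [← integral_indicator measurableSet_Sq, ← integral_indicator
    (show MeasurableSet {p ∈ Sq | P p} from measurableSet_Sq.inter hm)]
  congr 1
  ext p
  by_cases hp : P p
  · have : p ∈ {p ∈ Sq | P p} ↔ p ∈ Sq := ⟨fun h => h.1, fun h => ⟨h, hp⟩⟩
    by_cases hs : p ∈ Sq
    · rw [indicator_of_mem (this.2 hs), indicator_of_mem hs]
    · rw [indicator_of_notMem (fun h' => hs (this.1 h')), indicator_of_notMem hs]
  · have : h p = 0 := by
      by_contra h0
      exact hp (H p h0)
    simp [indicator, this]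

lemma massOn_zero {h : ℝ × ℝ → ℝ} {P : ℝ × ℝ → Prop}
    (H : ∀ p, h p ≠ 0 → ¬ P p) : massOn h P = 0 := by
  unfold massOn
  refine setIntegral_eq_zero_of_forall_eq_zero ?_
  intro p hp
  by_contra h0
  exact H p h0 hp.2

/-- A nonnegative continuous bump of unit mass on the square, positive exactly on the open cone
`{a x < y, β y < α x}`. The pair `(α, β)` encodes the upper slope `α / β`, with `β = 0` allowed, so
that the cone may reach up to the vertical axis. -/
lemma exists_bump {a α β : ℝ} (ha : 0 ≤ a) (hβ : 0 ≤ β) (hαβ : a * β < α) :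
    ∃ ψ : ℝ × ℝ → ℝ, Continuous ψ ∧ (∀ p, 0 ≤ ψ p) ∧
      (∀ p, ψ p ≠ 0 ↔ a * p.1 < p.2 ∧ β * p.2 < α * p.1) ∧ ∫ p in Sq, ψ p = 1 := by
  set u : ℝ × ℝ → ℝ := fun p => max 0 (p.2 - a * p.1) * max 0 (α * p.1 - β * p.2) with hu
  have uc : Continuous u := by fun_prop
  have un : ∀ p, 0 ≤ u p := fun p => mul_nonneg (le_max_left _ _) (le_max_left _ _)
  have us : ∀ p, u p ≠ 0 ↔ a * p.1 < p.2 ∧ β * p.2 < α * p.1 := by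
    intro p
    have key : ∀ x : ℝ, max 0 x ≠ 0 ↔ 0 < x := by
      intro x
      rcases le_or_gt x 0 with hx | hx
      · simp [max_eq_left hx, hx.not_gt]
      · simp [max_eq_right hx.le, hx, hx.ne']
    simp only [hu, mul_ne_zero_iff, key, sub_pos]
  have hpos : 0 < ∫ p in Sq, u p := by
    rw [setIntegral_pos_iff_support_of_nonneg_ae (Filter.Eventually.of_forall un)
      (uc.continuousOn.integrableOn_compact isCompact_Sq)]
    have hO : IsOpen (Function.support u ∩ (Ioo (-1 : ℝ) 1 ×ˢ Ioo (-1 : ℝ) 1)) :=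
      (uc.isOpen_support).inter (isOpen_Ioo.prod isOpen_Ioo)
    -- the slope `a + δ` lies strictly inside the cone, also when `β = 0`
    have hδ : 0 < (α - a * β) / (β + 1) := div_pos (by linarith) (by linarith)
    have hδ' : (α - a * β) / (β + 1) * (β + 1) = α - a * β := by field_simp
    set δ := (α - a * β) / (β + 1)
    have hm : 0 < 1 + (a + δ) := by linarith
    have hne : (Function.support u ∩ (Ioo (-1 : ℝ) 1 ×ˢ Ioo (-1 : ℝ) 1)).Nonempty := by
      refine ⟨(1 / (1 + (a + δ)), (a + δ) / (1 + (a + δ))), ?_, ⟨?_, ?_⟩, ⟨?_, ?_⟩⟩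
      · refine (us _).2 ⟨?_, ?_⟩
        · rw [mul_one_div]
          exact div_lt_div_of_pos_right (by linarith) hm
        · rw [mul_one_div, mul_div_assoc']
          exact div_lt_div_of_pos_right (by nlinarith) hm
      · have : 0 < 1 / (1 + (a + δ)) := by positivity
        dsimp only
        linarith
      · dsimp only
        rw [div_lt_one hm]
        linarith
      · have : 0 < (a + δ) / (1 + (a + δ)) := by positivity
        dsimp only
        linarith
      · dsimp only
        rw [div_lt_one hm]
        linarith
    refine (hO.measure_pos volume hne).trans_le (measure_mono ?_)
    exact inter_subset_inter_right _ (prod_mono Ioo_subset_Icc_self Ioo_subset_Icc_self)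
  refine ⟨fun p => (∫ p in Sq, u p)⁻¹ * u p, by fun_prop,
    fun p => mul_nonneg (inv_nonneg.2 hpos.le) (un p), fun p => ?_, ?_⟩
  · rw [← us p]
    simp [hpos.ne']
  · rw [integral_const_mul, inv_mul_cancel₀ hpos.ne']

lemma ae_ne_line (s : ℝ) : ∀ᵐ p : ℝ × ℝ, p.2 ≠ s * p.1 := by
  have h := Measure.addHaar_submodule (volume : Measure (ℝ × ℝ))
    (LinearMap.ker (LinearMap.snd ℝ ℝ ℝ - s • LinearMap.fst ℝ ℝ ℝ)) (by
      intro h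
      have : ((0, 1) : ℝ × ℝ) ∈
          LinearMap.ker (LinearMap.snd ℝ ℝ ℝ - s • LinearMap.fst ℝ ℝ ℝ) := by
        rw [h]; trivial
      simp at this)
  rw [ae_iff]
  convert h using 2
  ext p
  simp [sub_eq_zero]

lemma ae_fst_ne_zero : ∀ᵐ p : ℝ × ℝ, p.1 ≠ 0 := by
  have h := Measure.addHaar_submodule (volume : Measure (ℝ × ℝ))
    (LinearMap.ker (LinearMap.fst ℝ ℝ ℝ)) (by
      intro h
      have : ((1, 0) : ℝ × ℝ) ∈ LinearMap.ker (LinearMap.fst ℝ ℝ ℝ) := by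
        rw [h]; trivial
      simp at this)
  rw [ae_iff]
  convert h using 2
  ext p
  simp

/-- The angular distribution of a profile can be prescribed at four slopes: the five sectors they
cut out of the quadrant receive the masses `w0, …, w4`. -/
lemma exists_profile {s1 s2 s3 s4 w0 w1 w2 w3 w4 : ℝ} (h1 : 0 < s1) (h2 : s1 < s2) (h3 : s2 < s3)
    (h4 : s3 < s4) (k0 : 0 < w0) (k1 : 0 < w1) (k2 : 0 < w2) (k3 : 0 < w3) (k4 : 0 < w4) :
    ∃ h, IsProfile h ∧
      massOn h (fun _ => True) = w0 + w1 + w2 + w3 + w4 ∧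
      massOn h (fun p => p.2 < p.1 * s1) = w0 ∧
      massOn h (fun p => p.2 < p.1 * s2) = w0 + w1 ∧
      massOn h (fun p => p.2 < p.1 * s3) = w0 + w1 + w2 ∧
      massOn h (fun p => p.2 < p.1 * s4) = w0 + w1 + w2 + w3 ∧
      massOn h (fun p => p.1 < p.2 * s1⁻¹) = w1 + w2 + w3 + w4 ∧
      massOn h (fun p => p.1 < p.2 * s2⁻¹) = w2 + w3 + w4 ∧
      massOn h (fun p => p.1 < p.2 * s3⁻¹) = w3 + w4 ∧
      massOn h (fun p => p.1 < p.2 * s4⁻¹) = w4 := by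
  obtain ⟨u0, c0, n0, z0, m0⟩ := exists_bump (a := 0) (α := s1) (β := 1) (by linarith)
    (by norm_num) (by linarith)
  obtain ⟨u1, c1, n1, z1, m1⟩ := exists_bump (a := s1) (α := s2) (β := 1) (by linarith)
    (by norm_num) (by linarith)
  obtain ⟨u2, c2, n2, z2, m2⟩ := exists_bump (a := s2) (α := s3) (β := 1) (by linarith)
    (by norm_num) (by linarith)
  obtain ⟨u3, c3, n3, z3, m3⟩ := exists_bump (a := s3) (α := s4) (β := 1) (by linarith)
    (by norm_num) (by linarith)
  obtain ⟨u4, c4, n4, z4, m4⟩ := exists_bump (a := s4) (α := 1) (β := 0) (by linarith)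
    (by norm_num) (by linarith)
  have split : ∀ P : ℝ × ℝ → Prop,
      massOn (fun p => w0 * u0 p + w1 * u1 p + w2 * u2 p + w3 * u3 p + w4 * u4 p) P =
        w0 * massOn u0 P + w1 * massOn u1 P + w2 * massOn u2 P + w3 * massOn u3 P
          + w4 * massOn u4 P := by
    intro P
    have i0 := (massOn_integrable c0 P).const_mul w0
    have i1 := (massOn_integrable c1 P).const_mul w1
    have i2 := (massOn_integrable c2 P).const_mul w2
    have i3 := (massOn_integrable c3 P).const_mul w3
    have i4 := (massOn_integrable c4 P).const_mul w4
    have j1 : IntegrableOn (fun p => w0 * u0 p + w1 * u1 p) {p ∈ Sq | P p} := i0.add i1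
    have j2 : IntegrableOn (fun p => w0 * u0 p + w1 * u1 p + w2 * u2 p) {p ∈ Sq | P p} :=
      j1.add i2
    have j3 : IntegrableOn (fun p => w0 * u0 p + w1 * u1 p + w2 * u2 p + w3 * u3 p)
        {p ∈ Sq | P p} := j2.add i3
    unfold massOn
    beta_reduce
    rw [integral_add j3 i4, integral_add j2 i3, integral_add j1 i2, integral_add i0 i1]
    simp only [integral_const_mul]
  have one : ∀ {u : ℝ × ℝ → ℝ} {P : ℝ × ℝ → Prop}, ∫ p in Sq, u p = 1 → MeasurableSet {p | P p} →
      (∀ p, u p ≠ 0 → P p) → massOn u P = 1 := fun hu hm H => (massOn_eq hm H).trans hu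
  have mb : ∀ s : ℝ, MeasurableSet {p : ℝ × ℝ | p.2 < p.1 * s} := fun s =>
    measurableSet_lt (by fun_prop) (by fun_prop)
  have ma : ∀ s : ℝ, MeasurableSet {p : ℝ × ℝ | p.1 < p.2 * s} := fun s =>
    measurableSet_lt (by fun_prop) (by fun_prop)
  -- a sector with slopes in `[a, b]` lies below slope `s` if `b ≤ s`, and above it if `s ≤ a`
  have low : ∀ {u : ℝ × ℝ → ℝ} {a b s : ℝ}, 0 ≤ a → a < b → b ≤ s →
      (∀ p, u p ≠ 0 ↔ a * p.1 < p.2 ∧ 1 * p.2 < b * p.1) → ∫ p in Sq, u p = 1 →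
      massOn u (fun p => p.2 < p.1 * s) = 1 ∧ massOn u (fun p => p.1 < p.2 * s⁻¹) = 0 := by
    intro u a b s ha hab hbs hz hu
    have H : ∀ p, u p ≠ 0 → p.2 < p.1 * s := by
      intro p hp
      obtain ⟨q1, q2⟩ := (hz p).1 hp
      have : 0 < p.1 := by
        by_contra hx
        nlinarith
      nlinarith
    refine ⟨one hu (mb s) H, massOn_zero fun p hp => ?_⟩
    have := H p hp
    rw [not_lt, ← div_eq_mul_inv, div_le_iff₀ (by linarith)]
    exact this.le
  have high : ∀ {u : ℝ × ℝ → ℝ} {a α β s : ℝ}, 0 < s → s ≤ a → 0 ≤ β → a * β < α →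
      (∀ p, u p ≠ 0 ↔ a * p.1 < p.2 ∧ β * p.2 < α * p.1) → ∫ p in Sq, u p = 1 →
      massOn u (fun p => p.2 < p.1 * s) = 0 ∧ massOn u (fun p => p.1 < p.2 * s⁻¹) = 1 := by
    intro u a α β s hs hsa hβ hab hz hu
    have H : ∀ p, u p ≠ 0 → p.1 * s < p.2 := by
      intro p hp
      obtain ⟨q1, q2⟩ := (hz p).1 hp
      have : 0 < p.1 := by
        by_contra hx
        nlinarith [mul_le_mul_of_nonneg_left q1.le hβ]
      nlinarith
    refine ⟨massOn_zero fun p hp => (H p hp).not_gt, one hu (ma _) fun p hp => ?_⟩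
    rw [← div_eq_mul_inv, lt_div_iff₀ hs]
    exact H p hp
  have P0 : ∀ s, s1 ≤ s → _ := fun s hs => low (s := s) le_rfl h1 hs z0 m0
  have P1 : ∀ s, s2 ≤ s → _ := fun s hs => low (s := s) h1.le h2 hs z1 m1
  have P2 : ∀ s, s3 ≤ s → _ := fun s hs => low (s := s) (by linarith) h3 hs z2 m2
  have P3 : ∀ s, s4 ≤ s → _ := fun s hs => low (s := s) (by linarith) h4 hs z3 m3
  have N1 : ∀ s, 0 < s → s ≤ s1 → _ := fun s h0 hs =>
    high (s := s) h0 hs zero_le_one (by linarith) z1 m1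
  have N2 : ∀ s, 0 < s → s ≤ s2 → _ := fun s h0 hs =>
    high (s := s) h0 hs zero_le_one (by linarith) z2 m2
  have N3 : ∀ s, 0 < s → s ≤ s3 → _ := fun s h0 hs =>
    high (s := s) h0 hs zero_le_one (by linarith) z3 m3
  have N4 : ∀ s, 0 < s → s ≤ s4 → _ := fun s h0 hs =>
    high (s := s) h0 hs le_rfl (by linarith) z4 m4
  refine ⟨fun p => w0 * u0 p + w1 * u1 p + w2 * u2 p + w3 * u3 p + w4 * u4 p,
    ⟨by fun_prop, fun p => ?_, fun p hp => ?_, ?_⟩, ?_, ?_, ?_, ?_, ?_, ?_, ?_, ?_, ?_⟩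
  · have := n0 p; have := n1 p; have := n2 p; have := n3 p; have := n4 p
    positivity
  · -- every sector is contained in the open quadrant
    have aux : ∀ {u : ℝ × ℝ → ℝ} {a α β : ℝ}, 0 ≤ a → 0 ≤ β → a * β < α →
        (∀ p, u p ≠ 0 ↔ a * p.1 < p.2 ∧ β * p.2 < α * p.1) → u p = 0 := by
      intro u a α β ha hβ hab hz
      by_contra hne
      obtain ⟨q1, q2⟩ := (hz p).1 hne
      have hx : 0 < p.1 := by
        by_contra hx
        nlinarith [mul_le_mul_of_nonneg_left q1.le hβ]
      have hy : 0 < p.2 := by nlinarith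
      rcases hp with hp | hp <;> linarith
    rw [aux le_rfl zero_le_one (by linarith) z0, aux h1.le zero_le_one (by linarith) z1,
      aux (by linarith) zero_le_one (by linarith) z2,
      aux (by linarith) zero_le_one (by linarith) z3, aux (by linarith) le_rfl (by linarith) z4]
    ring
  · filter_upwards [ae_ne_line s1, ae_ne_line s2, ae_ne_line s3, ae_ne_line s4] with p e1 e2 e3 e4
      hx hy
    have v0 := mul_nonneg k0.le (n0 p)
    have v1 := mul_nonneg k1.le (n1 p)
    have v2 := mul_nonneg k2.le (n2 p)
    have v3 := mul_nonneg k3.le (n3 p)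
    have v4 := mul_nonneg k4.le (n4 p)
    have pos : ∀ {u : ℝ × ℝ → ℝ} {w : ℝ}, 0 < w → (∀ p, 0 ≤ u p) → u p ≠ 0 → 0 < w * u p :=
      fun hw hn hne => mul_pos hw (lt_of_le_of_ne (hn p) hne.symm)
    rcases lt_or_gt_of_ne e1 with g1 | g1
    · have := pos k0 n0 ((z0 p).2 ⟨by linarith, by linarith⟩)
      linarith
    rcases lt_or_gt_of_ne e2 with g2 | g2
    · have := pos k1 n1 ((z1 p).2 ⟨by linarith, by linarith⟩)
      linarith
    rcases lt_or_gt_of_ne e3 with g3 | g3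
    · have := pos k2 n2 ((z2 p).2 ⟨by linarith, by linarith⟩)
      linarith
    rcases lt_or_gt_of_ne e4 with g4 | g4
    · have := pos k3 n3 ((z3 p).2 ⟨by linarith, by linarith⟩)
      linarith
    · have := pos k4 n4 ((z4 p).2 ⟨by linarith, by linarith⟩)
      linarith
  · have t : ∀ {u : ℝ × ℝ → ℝ}, ∫ p in Sq, u p = 1 → massOn u (fun _ => True) = 1 :=
      fun hu => one hu (by simp) (by simp)
    rw [split, t m0, t m1, t m2, t m3, t m4]
    ring
  · rw [split, (P0 s1 le_rfl).1, (N1 s1 h1 le_rfl).1, (N2 s1 h1 (by linarith)).1,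
      (N3 s1 h1 (by linarith)).1, (N4 s1 h1 (by linarith)).1]
    ring
  · rw [split, (P0 s2 h2.le).1, (P1 s2 le_rfl).1, (N2 s2 (by linarith) le_rfl).1,
      (N3 s2 (by linarith) (by linarith)).1, (N4 s2 (by linarith) (by linarith)).1]
    ring
  · rw [split, (P0 s3 (by linarith)).1, (P1 s3 (by linarith)).1, (P2 s3 le_rfl).1,
      (N3 s3 (by linarith) le_rfl).1, (N4 s3 (by linarith) (by linarith)).1]
    ring
  · rw [split, (P0 s4 (by linarith)).1, (P1 s4 (by linarith)).1, (P2 s4 (by linarith)).1,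
      (P3 s4 le_rfl).1, (N4 s4 (by linarith) le_rfl).1]
    ring
  · rw [split, (P0 s1 le_rfl).2, (N1 s1 h1 le_rfl).2, (N2 s1 h1 (by linarith)).2,
      (N3 s1 h1 (by linarith)).2, (N4 s1 h1 (by linarith)).2]
    ring
  · rw [split, (P0 s2 h2.le).2, (P1 s2 le_rfl).2, (N2 s2 (by linarith) le_rfl).2,
      (N3 s2 (by linarith) (by linarith)).2, (N4 s2 (by linarith) (by linarith)).2]
    ring
  · rw [split, (P0 s3 (by linarith)).2, (P1 s3 (by linarith)).2, (P2 s3 le_rfl).2,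
      (N3 s3 (by linarith) le_rfl).2, (N4 s3 (by linarith) (by linarith)).2]
    ring
  · rw [split, (P0 s4 (by linarith)).2, (P1 s4 (by linarith)).2, (P2 s4 (by linarith)).2,
      (P3 s4 le_rfl).2, (N4 s4 (by linarith) le_rfl).2]
    ring

/-! ### Gluing four profiles by reflections -/

/-- The reflection of the plane that changes the sign of the first coordinate. -/
def reflX : ℝ × ℝ ≃ᵐ ℝ × ℝ := (MeasurableEquiv.neg ℝ).prodCongr (MeasurableEquiv.refl ℝ)

/-- The reflection of the plane that changes the sign of the second coordinate. -/
def reflY : ℝ × ℝ ≃ᵐ ℝ × ℝ := (MeasurableEquiv.refl ℝ).prodCongr (MeasurableEquiv.neg ℝ)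

lemma reflX_mp : MeasurePreserving reflX (volume : Measure (ℝ × ℝ)) volume :=
  (Measure.measurePreserving_neg (volume : Measure ℝ)).prod (MeasurePreserving.id volume)

lemma reflY_mp : MeasurePreserving reflY (volume : Measure (ℝ × ℝ)) volume :=
  (MeasurePreserving.id volume).prod (Measure.measurePreserving_neg (volume : Measure ℝ))

/-- The function on the square assembled from one profile per quadrant, in the order of the
regions `R1`, `R2`, `R3`, `R4`. -/
def glue (h1 h2 h3 h4 : ℝ × ℝ → ℝ) : ℝ × ℝ → ℝ :=
  Sq.indicator fun p => h1 (p.1, p.2) + h2 (-p.1, p.2) + h3 (-p.1, -p.2) + h4 (p.1, -p.2)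

lemma massOn_eq_integral {h : ℝ × ℝ → ℝ} {P : ℝ × ℝ → Prop} (hm : MeasurableSet {p | P p}) :
    massOn h P = ∫ p, {p ∈ Sq | P p}.indicator h p :=
  (integral_indicator (measurableSet_Sq.inter hm)).symm

lemma glue_integrable {h1 h2 h3 h4 : ℝ × ℝ → ℝ} (p1 : IsProfile h1) (p2 : IsProfile h2)
    (p3 : IsProfile h3) (p4 : IsProfile h4) : Integrable (glue h1 h2 h3 h4) := by
  have := p1.cont
  have := p2.cont
  have := p3.cont
  have := p4.cont
  unfold glue
  rw [integrable_indicator_iff measurableSet_Sq]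
  exact ContinuousOn.integrableOn_compact isCompact_Sq (by fun_prop)

/-- Over a region inside the closed first quadrant only the first profile contributes. Membership
of boundary points is left free, since all profiles vanish on the axes. -/
lemma glue_int1 {h1 h2 h3 h4 : ℝ × ℝ → ℝ} (p1 : IsProfile h1) (p2 : IsProfile h2)
    (p3 : IsProfile h3) (p4 : IsProfile h4) {R : Set (ℝ × ℝ)} {P : ℝ × ℝ → Prop}
    (hR : MeasurableSet R) (hm : MeasurableSet {p | P p})
    (H : ∀ p ∈ R, 0 ≤ p.1 ∧ 0 ≤ p.2)
    (H' : ∀ p ∈ Sq, 0 < p.1 → 0 < p.2 → (p ∈ R ↔ P p)) :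
    ∫ p in R, glue h1 h2 h3 h4 p = massOn h1 P := by
  rw [massOn_eq_integral hm, ← integral_indicator hR]
  congr 1
  ext p
  by_cases hq : 0 < p.1 ∧ 0 < p.2
  · have e2 : h2 (-p.1, p.2) = 0 := p2.vanish _ (Or.inl (by dsimp only; linarith))
    have e3 : h3 (-p.1, -p.2) = 0 := p3.vanish _ (Or.inl (by dsimp only; linarith))
    have e4 : h4 (p.1, -p.2) = 0 := p4.vanish _ (Or.inr (by dsimp only; linarith))
    by_cases hs : p ∈ Sq
    · by_cases hp : P p
      · have hr := (H' p hs hq.1 hq.2).2 hp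
        simp [glue, indicator, hs, hp, hr, e2, e3, e4]
      · have hr : p ∉ R := fun hr => hp ((H' p hs hq.1 hq.2).1 hr)
        simp [indicator, hp, hr]
    · simp [glue, indicator, hs]
  · have e0 : h1 p = 0 := p1.vanish p (by
      by_contra hc
      push Not at hc
      exact hq hc)
    by_cases hr : p ∈ R
    · obtain ⟨a, b⟩ := H p hr
      have e2 : h2 (-p.1, p.2) = 0 := p2.vanish _ (Or.inl (by dsimp only; linarith))
      have e3 : h3 (-p.1, -p.2) = 0 := p3.vanish _ (Or.inl (by dsimp only; linarith))
      have e4 : h4 (p.1, -p.2) = 0 := p4.vanish _ (Or.inr (by dsimp only; linarith))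
      simp [glue, indicator, e0, e2, e3, e4]
    · simp [indicator, hr, e0]

lemma glue_reflX (h1 h2 h3 h4 : ℝ × ℝ → ℝ) (p : ℝ × ℝ) :
    glue h1 h2 h3 h4 (reflX p) = glue h2 h1 h4 h3 p := by
  obtain ⟨x, y⟩ := p
  change glue h1 h2 h3 h4 (-x, y) = glue h2 h1 h4 h3 (x, y)
  have hS : (-x, y) ∈ Sq ↔ (x, y) ∈ Sq := by
    simp only [Sq, mem_prod, mem_Icc]
    constructor <;> rintro ⟨⟨a, b⟩, c, d⟩ <;> refine ⟨⟨?_, ?_⟩, ?_, ?_⟩ <;> linarith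
  unfold glue
  by_cases hp : (x, y) ∈ Sq
  · rw [indicator_of_mem (hS.2 hp), indicator_of_mem hp]
    simp only [neg_neg]
    ring
  · rw [indicator_of_notMem (fun h => hp (hS.1 h)), indicator_of_notMem hp]

lemma glue_reflY (h1 h2 h3 h4 : ℝ × ℝ → ℝ) (p : ℝ × ℝ) :
    glue h1 h2 h3 h4 (reflY p) = glue h4 h3 h2 h1 p := by
  obtain ⟨x, y⟩ := p
  change glue h1 h2 h3 h4 (x, -y) = glue h4 h3 h2 h1 (x, y)
  have hS : (x, -y) ∈ Sq ↔ (x, y) ∈ Sq := by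
    simp only [Sq, mem_prod, mem_Icc]
    constructor <;> rintro ⟨⟨a, b⟩, c, d⟩ <;> refine ⟨⟨?_, ?_⟩, ?_, ?_⟩ <;> linarith
  unfold glue
  by_cases hp : (x, y) ∈ Sq
  · rw [indicator_of_mem (hS.2 hp), indicator_of_mem hp]
    simp only [neg_neg]
    ring
  · rw [indicator_of_notMem (fun h => hp (hS.1 h)), indicator_of_notMem hp]

lemma glue_int2 {h1 h2 h3 h4 : ℝ × ℝ → ℝ} (p1 : IsProfile h1) (p2 : IsProfile h2)
    (p3 : IsProfile h3) (p4 : IsProfile h4) {R : Set (ℝ × ℝ)} {P : ℝ × ℝ → Prop}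
    (hR : MeasurableSet R) (hm : MeasurableSet {p | P p})
    (H : ∀ p : ℝ × ℝ, (-p.1, p.2) ∈ R → 0 ≤ p.1 ∧ 0 ≤ p.2)
    (H' : ∀ p ∈ Sq, 0 < p.1 → 0 < p.2 → ((-p.1, p.2) ∈ R ↔ P p)) :
    ∫ p in R, glue h1 h2 h3 h4 p = massOn h2 P := by
  rw [← reflX_mp.setIntegral_preimage_emb reflX.measurableEmbedding]
  simp only [glue_reflX]
  exact glue_int1 p2 p1 p4 p3 (reflX.measurable hR) hm H H'

lemma glue_int4 {h1 h2 h3 h4 : ℝ × ℝ → ℝ} (p1 : IsProfile h1) (p2 : IsProfile h2)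
    (p3 : IsProfile h3) (p4 : IsProfile h4) {R : Set (ℝ × ℝ)} {P : ℝ × ℝ → Prop}
    (hR : MeasurableSet R) (hm : MeasurableSet {p | P p})
    (H : ∀ p : ℝ × ℝ, (p.1, -p.2) ∈ R → 0 ≤ p.1 ∧ 0 ≤ p.2)
    (H' : ∀ p ∈ Sq, 0 < p.1 → 0 < p.2 → ((p.1, -p.2) ∈ R ↔ P p)) :
    ∫ p in R, glue h1 h2 h3 h4 p = massOn h4 P := by
  rw [← reflY_mp.setIntegral_preimage_emb reflY.measurableEmbedding]
  simp only [glue_reflY]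
  exact glue_int1 p4 p3 p2 p1 (reflY.measurable hR) hm H H'

lemma glue_int3 {h1 h2 h3 h4 : ℝ × ℝ → ℝ} (p1 : IsProfile h1) (p2 : IsProfile h2)
    (p3 : IsProfile h3) (p4 : IsProfile h4) {R : Set (ℝ × ℝ)} {P : ℝ × ℝ → Prop}
    (hR : MeasurableSet R) (hm : MeasurableSet {p | P p})
    (H : ∀ p : ℝ × ℝ, (-p.1, -p.2) ∈ R → 0 ≤ p.1 ∧ 0 ≤ p.2)
    (H' : ∀ p ∈ Sq, 0 < p.1 → 0 < p.2 → ((-p.1, -p.2) ∈ R ↔ P p)) :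
    ∫ p in R, glue h1 h2 h3 h4 p = massOn h3 P := by
  rw [← reflX_mp.setIntegral_preimage_emb reflX.measurableEmbedding]
  simp only [glue_reflX]
  exact glue_int4 p2 p1 p4 p3 (reflX.measurable hR) hm H H'

/-! ### Masses of the sectors and of the half-squares -/

section Regions

variable {h1 h2 h3 h4 : ℝ × ℝ → ℝ} (t : ℝ)

lemma measurable_below : MeasurableSet {p : ℝ × ℝ | p.2 < p.1 * t} :=
  measurableSet_lt (by fun_prop) (by fun_prop)

lemma measurable_above : MeasurableSet {p : ℝ × ℝ | p.1 < p.2 * t} :=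
  measurableSet_lt (by fun_prop) (by fun_prop)

lemma I1_glue (p1 : IsProfile h1) (p2 : IsProfile h2) (p3 : IsProfile h3) (p4 : IsProfile h4) :
    I1 (glue h1 h2 h3 h4) (arctan t) = massOn h1 (fun p => p.2 < p.1 * t) := by
  have hne := (arctan_lt_pi_div_two t).ne
  refine glue_int1 p1 p2 p3 p4 ?_ (measurable_below t) ?_ ?_
  · simp only [R1, hne, tan_arctan, false_or]
    measurability
  · intro p hp
    simp only [R1, hne, tan_arctan, false_or, mem_ofPred_eq] at hp
    exact ⟨by linarith, by linarith⟩
  · rintro p ⟨⟨a, b⟩, c, d⟩ hx hy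
    simp only [R1, hne, tan_arctan, false_or, mem_ofPred_eq]
    constructor
    · rintro ⟨_, _, _, h⟩
      exact h
    · intro h
      exact ⟨by linarith, by linarith, by linarith, h⟩

lemma I2_glue (p1 : IsProfile h1) (p2 : IsProfile h2) (p3 : IsProfile h3) (p4 : IsProfile h4) :
    I2 (glue h1 h2 h3 h4) (arctan t) = massOn h2 (fun p => p.2 < p.1 * t) := by
  have hne := (arctan_lt_pi_div_two t).ne
  refine glue_int2 p1 p2 p3 p4 ?_ (measurable_below t) ?_ ?_
  · simp only [R2, hne, tan_arctan, false_or]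
    measurability
  · intro p hp
    simp only [R2, hne, tan_arctan, false_or, mem_ofPred_eq] at hp
    exact ⟨by linarith, by linarith⟩
  · rintro p ⟨⟨a, b⟩, c, d⟩ hx hy
    simp only [R2, hne, tan_arctan, false_or, mem_ofPred_eq, neg_neg]
    constructor
    · rintro ⟨_, _, _, h⟩
      exact h
    · intro h
      exact ⟨by linarith, by linarith, by linarith, h⟩

lemma I3_glue (p1 : IsProfile h1) (p2 : IsProfile h2) (p3 : IsProfile h3) (p4 : IsProfile h4) :
    I3 (glue h1 h2 h3 h4) (arctan t) = massOn h3 (fun p => p.2 < p.1 * t) := by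
  have hne := (arctan_lt_pi_div_two t).ne
  refine glue_int3 p1 p2 p3 p4 ?_ (measurable_below t) ?_ ?_
  · simp only [R3, hne, tan_arctan, false_or]
    measurability
  · intro p hp
    simp only [R3, hne, tan_arctan, false_or, mem_ofPred_eq] at hp
    exact ⟨by linarith, by linarith⟩
  · rintro p ⟨⟨a, b⟩, c, d⟩ hx hy
    simp only [R3, hne, tan_arctan, false_or, mem_ofPred_eq, neg_neg]
    constructor
    · rintro ⟨_, _, _, h⟩
      exact h
    · intro h
      exact ⟨by linarith, by linarith, by linarith, h⟩

lemma I4_glue (p1 : IsProfile h1) (p2 : IsProfile h2) (p3 : IsProfile h3) (p4 : IsProfile h4) :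
    I4 (glue h1 h2 h3 h4) (arctan t) = massOn h4 (fun p => p.2 < p.1 * t) := by
  have hne := (arctan_lt_pi_div_two t).ne
  refine glue_int4 p1 p2 p3 p4 ?_ (measurable_below t) ?_ ?_
  · simp only [R4, hne, tan_arctan, false_or]
    measurability
  · intro p hp
    simp only [R4, hne, tan_arctan, false_or, mem_ofPred_eq] at hp
    exact ⟨by linarith, by linarith⟩
  · rintro p ⟨⟨a, b⟩, c, d⟩ hx hy
    simp only [R4, hne, tan_arctan, false_or, mem_ofPred_eq, neg_neg]
    constructor
    · rintro ⟨_, _, _, h⟩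
      exact h
    · intro h
      exact ⟨by linarith, by linarith, by linarith, h⟩

lemma I5_glue (p1 : IsProfile h1) (p2 : IsProfile h2) (p3 : IsProfile h3) (p4 : IsProfile h4) :
    I5 (glue h1 h2 h3 h4) (arctan t) = massOn h1 (fun p => p.1 < p.2 * t) := by
  have hne := (arctan_lt_pi_div_two t).ne
  refine glue_int1 p1 p2 p3 p4 ?_ (measurable_above t) ?_ ?_
  · simp only [R5, hne, tan_arctan, false_or]
    measurability
  · intro p hp
    simp only [R5, hne, tan_arctan, false_or, mem_ofPred_eq] at hp
    exact ⟨by linarith, by linarith⟩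
  · rintro p ⟨⟨a, b⟩, c, d⟩ hx hy
    simp only [R5, hne, tan_arctan, false_or, mem_ofPred_eq]
    constructor
    · rintro ⟨_, _, _, h⟩
      exact h
    · intro h
      exact ⟨by linarith, by linarith, by linarith, h⟩

lemma I6_glue (p1 : IsProfile h1) (p2 : IsProfile h2) (p3 : IsProfile h3) (p4 : IsProfile h4) :
    I6 (glue h1 h2 h3 h4) (arctan t) = massOn h2 (fun p => p.1 < p.2 * t) := by
  have hne := (arctan_lt_pi_div_two t).ne
  refine glue_int2 p1 p2 p3 p4 ?_ (measurable_above t) ?_ ?_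
  · simp only [R6, hne, tan_arctan, false_or]
    measurability
  · intro p hp
    simp only [R6, hne, tan_arctan, false_or, mem_ofPred_eq] at hp
    exact ⟨by linarith, by linarith⟩
  · rintro p ⟨⟨a, b⟩, c, d⟩ hx hy
    simp only [R6, hne, tan_arctan, false_or, mem_ofPred_eq, neg_neg]
    constructor
    · rintro ⟨_, _, _, h⟩
      exact h
    · intro h
      exact ⟨by linarith, by linarith, by linarith, h⟩

lemma I7_glue (p1 : IsProfile h1) (p2 : IsProfile h2) (p3 : IsProfile h3) (p4 : IsProfile h4) :
    I7 (glue h1 h2 h3 h4) (arctan t) = massOn h3 (fun p => p.1 < p.2 * t) := by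
  have hne := (arctan_lt_pi_div_two t).ne
  refine glue_int3 p1 p2 p3 p4 ?_ (measurable_above t) ?_ ?_
  · simp only [R7, hne, tan_arctan, false_or]
    measurability
  · intro p hp
    simp only [R7, hne, tan_arctan, false_or, mem_ofPred_eq] at hp
    exact ⟨by linarith, by linarith⟩
  · rintro p ⟨⟨a, b⟩, c, d⟩ hx hy
    simp only [R7, hne, tan_arctan, false_or, mem_ofPred_eq, neg_neg]
    constructor
    · rintro ⟨_, _, _, h⟩
      exact h
    · intro h
      exact ⟨by linarith, by linarith, by linarith, h⟩

lemma I8_glue (p1 : IsProfile h1) (p2 : IsProfile h2) (p3 : IsProfile h3) (p4 : IsProfile h4) :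
    I8 (glue h1 h2 h3 h4) (arctan t) = massOn h4 (fun p => p.1 < p.2 * t) := by
  have hne := (arctan_lt_pi_div_two t).ne
  refine glue_int4 p1 p2 p3 p4 ?_ (measurable_above t) ?_ ?_
  · simp only [R8, hne, tan_arctan, false_or]
    measurability
  · intro p hp
    simp only [R8, hne, tan_arctan, false_or, mem_ofPred_eq] at hp
    exact ⟨by linarith, by linarith⟩
  · rintro p ⟨⟨a, b⟩, c, d⟩ hx hy
    simp only [R8, hne, tan_arctan, false_or, mem_ofPred_eq, neg_neg]
    constructor
    · rintro ⟨_, _, _, h⟩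
      exact h
    · intro h
      exact ⟨by linarith, by linarith, by linarith, h⟩

lemma Q1p_glue (p1 : IsProfile h1) (p2 : IsProfile h2) (p3 : IsProfile h3) (p4 : IsProfile h4) :
    Q1p (glue h1 h2 h3 h4) = massOn h1 (fun _ => True) + massOn h4 (fun _ => True) := by
  have hA : MeasurableSet {p : ℝ × ℝ | 0 < p.2} :=
    measurableSet_lt (by fun_prop) (by fun_prop)
  have hB : MeasurableSet {p : ℝ × ℝ | p ∈ Sq ∧ 0 < p.1} := by
    have hC : MeasurableSet {p : ℝ × ℝ | 0 < p.1} := measurableSet_lt (by fun_prop) (by fun_prop)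
    exact measurableSet_Sq.inter hC
  unfold Q1p
  rw [← integral_inter_add_sdiff hA (glue_integrable p1 p2 p3 p4).integrableOn]
  congr 1
  · refine glue_int1 p1 p2 p3 p4 (hB.inter hA) (by simp) ?_ ?_
    · rintro p ⟨⟨_, h⟩, h'⟩
      simp only [mem_ofPred_eq] at h h'
      exact ⟨by linarith, by linarith⟩
    · rintro p ⟨⟨a, b⟩, c, d⟩ hx hy
      simp only [Sq, mem_inter_iff, mem_ofPred_eq, mem_prod, mem_Icc, iff_true]
      exact ⟨⟨⟨⟨by linarith, by linarith⟩, by linarith, by linarith⟩, by linarith⟩, by linarith⟩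
  · refine glue_int4 p1 p2 p3 p4 (hB.diff hA) (by simp) ?_ ?_
    · rintro p ⟨⟨_, h⟩, h'⟩
      simp only [mem_ofPred_eq, not_lt] at h h'
      exact ⟨by linarith, by linarith⟩
    · rintro p ⟨⟨a, b⟩, c, d⟩ hx hy
      simp only [Sq, mem_sdiff, mem_ofPred_eq, mem_prod, mem_Icc, iff_true, not_lt]
      exact ⟨⟨⟨⟨by linarith, by linarith⟩, by linarith, by linarith⟩, by linarith⟩, by linarith⟩

lemma Q1m_glue (p1 : IsProfile h1) (p2 : IsProfile h2) (p3 : IsProfile h3) (p4 : IsProfile h4) :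
    Q1m (glue h1 h2 h3 h4) = massOn h2 (fun _ => True) + massOn h3 (fun _ => True) := by
  have hA : MeasurableSet {p : ℝ × ℝ | 0 < p.2} :=
    measurableSet_lt (by fun_prop) (by fun_prop)
  have hB : MeasurableSet {p : ℝ × ℝ | p ∈ Sq ∧ p.1 < 0} := by
    have hC : MeasurableSet {p : ℝ × ℝ | p.1 < 0} := measurableSet_lt (by fun_prop) (by fun_prop)
    exact measurableSet_Sq.inter hC
  unfold Q1m
  rw [← integral_inter_add_sdiff hA (glue_integrable p1 p2 p3 p4).integrableOn]
  congr 1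
  · refine glue_int2 p1 p2 p3 p4 (hB.inter hA) (by simp) ?_ ?_
    · rintro p ⟨⟨_, h⟩, h'⟩
      simp only [mem_ofPred_eq] at h h'
      exact ⟨by linarith, by linarith⟩
    · rintro p ⟨⟨a, b⟩, c, d⟩ hx hy
      simp only [Sq, mem_inter_iff, mem_ofPred_eq, mem_prod, mem_Icc, iff_true]
      exact ⟨⟨⟨⟨by linarith, by linarith⟩, by linarith, by linarith⟩, by linarith⟩, by linarith⟩
  · refine glue_int3 p1 p2 p3 p4 (hB.diff hA) (by simp) ?_ ?_
    · rintro p ⟨⟨_, h⟩, h'⟩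
      simp only [mem_ofPred_eq, not_lt] at h h'
      exact ⟨by linarith, by linarith⟩
    · rintro p ⟨⟨a, b⟩, c, d⟩ hx hy
      simp only [Sq, mem_sdiff, mem_ofPred_eq, mem_prod, mem_Icc, iff_true, not_lt]
      exact ⟨⟨⟨⟨by linarith, by linarith⟩, by linarith, by linarith⟩, by linarith⟩, by linarith⟩

lemma Q2p_glue (p1 : IsProfile h1) (p2 : IsProfile h2) (p3 : IsProfile h3) (p4 : IsProfile h4) :
    Q2p (glue h1 h2 h3 h4) = massOn h1 (fun _ => True) + massOn h2 (fun _ => True) := by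
  have hA : MeasurableSet {p : ℝ × ℝ | 0 < p.1} :=
    measurableSet_lt (by fun_prop) (by fun_prop)
  have hB : MeasurableSet {p : ℝ × ℝ | p ∈ Sq ∧ 0 < p.2} := by
    have hC : MeasurableSet {p : ℝ × ℝ | 0 < p.2} := measurableSet_lt (by fun_prop) (by fun_prop)
    exact measurableSet_Sq.inter hC
  unfold Q2p
  rw [← integral_inter_add_sdiff hA (glue_integrable p1 p2 p3 p4).integrableOn]
  congr 1
  · refine glue_int1 p1 p2 p3 p4 (hB.inter hA) (by simp) ?_ ?_
    · rintro p ⟨⟨_, h⟩, h'⟩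
      simp only [mem_ofPred_eq] at h h'
      exact ⟨by linarith, by linarith⟩
    · rintro p ⟨⟨a, b⟩, c, d⟩ hx hy
      simp only [Sq, mem_inter_iff, mem_ofPred_eq, mem_prod, mem_Icc, iff_true]
      exact ⟨⟨⟨⟨by linarith, by linarith⟩, by linarith, by linarith⟩, by linarith⟩, by linarith⟩
  · refine glue_int2 p1 p2 p3 p4 (hB.diff hA) (by simp) ?_ ?_
    · rintro p ⟨⟨_, h⟩, h'⟩
      simp only [mem_ofPred_eq, not_lt] at h h'
      exact ⟨by linarith, by linarith⟩
    · rintro p ⟨⟨a, b⟩, c, d⟩ hx hy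
      simp only [Sq, mem_sdiff, mem_ofPred_eq, mem_prod, mem_Icc, iff_true, not_lt]
      exact ⟨⟨⟨⟨by linarith, by linarith⟩, by linarith, by linarith⟩, by linarith⟩, by linarith⟩

lemma Q2m_glue (p1 : IsProfile h1) (p2 : IsProfile h2) (p3 : IsProfile h3) (p4 : IsProfile h4) :
    Q2m (glue h1 h2 h3 h4) = massOn h4 (fun _ => True) + massOn h3 (fun _ => True) := by
  have hA : MeasurableSet {p : ℝ × ℝ | 0 < p.1} :=
    measurableSet_lt (by fun_prop) (by fun_prop)
  have hB : MeasurableSet {p : ℝ × ℝ | p ∈ Sq ∧ p.2 < 0} := by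
    have hC : MeasurableSet {p : ℝ × ℝ | p.2 < 0} := measurableSet_lt (by fun_prop) (by fun_prop)
    exact measurableSet_Sq.inter hC
  unfold Q2m
  rw [← integral_inter_add_sdiff hA (glue_integrable p1 p2 p3 p4).integrableOn]
  congr 1
  · refine glue_int4 p1 p2 p3 p4 (hB.inter hA) (by simp) ?_ ?_
    · rintro p ⟨⟨_, h⟩, h'⟩
      simp only [mem_ofPred_eq] at h h'
      exact ⟨by linarith, by linarith⟩
    · rintro p ⟨⟨a, b⟩, c, d⟩ hx hy
      simp only [Sq, mem_inter_iff, mem_ofPred_eq, mem_prod, mem_Icc, iff_true]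
      exact ⟨⟨⟨⟨by linarith, by linarith⟩, by linarith, by linarith⟩, by linarith⟩, by linarith⟩
  · refine glue_int3 p1 p2 p3 p4 (hB.diff hA) (by simp) ?_ ?_
    · rintro p ⟨⟨_, h⟩, h'⟩
      simp only [mem_ofPred_eq, not_lt] at h h'
      exact ⟨by linarith, by linarith⟩
    · rintro p ⟨⟨a, b⟩, c, d⟩ hx hy
      simp only [Sq, mem_sdiff, mem_ofPred_eq, mem_prod, mem_Icc, iff_true, not_lt]
      exact ⟨⟨⟨⟨by linarith, by linarith⟩, by linarith, by linarith⟩, by linarith⟩, by linarith⟩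

end Regions

/-! ### The glued function as a density -/

lemma glue_total {h1 h2 h3 h4 : ℝ × ℝ → ℝ} (p1 : IsProfile h1) (p2 : IsProfile h2)
    (p3 : IsProfile h3) (p4 : IsProfile h4) :
    ∫ p in Sq, glue h1 h2 h3 h4 p =
      Q1p (glue h1 h2 h3 h4) + Q1m (glue h1 h2 h3 h4) := by
  have hA : MeasurableSet {p : ℝ × ℝ | 0 < p.1} := measurableSet_lt (by fun_prop) (by fun_prop)
  rw [← integral_inter_add_sdiff hA (glue_integrable p1 p2 p3 p4).integrableOn]
  congr 1
  refine setIntegral_congr_set ?_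
  filter_upwards [ae_fst_ne_zero] with p hp
  refine propext ⟨fun h => ⟨h.1, lt_of_le_of_ne (not_lt.1 h.2) hp⟩, fun h => ⟨h.1, not_lt.2 h.2.le⟩⟩

lemma ae_snd_ne_zero : ∀ᵐ p : ℝ × ℝ, p.2 ≠ 0 := by
  filter_upwards [ae_ne_line 0] with p hp
  simpa using hp

lemma glue_nice {h1 h2 h3 h4 : ℝ × ℝ → ℝ} (p1 : IsProfile h1) (p2 : IsProfile h2)
    (p3 : IsProfile h3) (p4 : IsProfile h4)
    (ht : Q1p (glue h1 h2 h3 h4) + Q1m (glue h1 h2 h3 h4) = 1) :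
    IsNiceDensity (glue h1 h2 h3 h4) where
  nonneg p := indicator_nonneg (fun p _ => by
    have := p1.nonneg (p.1, p.2)
    have := p2.nonneg (-p.1, p.2)
    have := p3.nonneg (-p.1, -p.2)
    have := p4.nonneg (p.1, -p.2)
    positivity) p
  vanish p hp := indicator_of_notMem hp _
  total := (glue_total p1 p2 p3 p4).trans ht
  cont := by
    have := p1.cont
    have := p2.cont
    have := p3.cont
    have := p4.cont
    refine ContinuousOn.congr (f := fun p : ℝ × ℝ =>
      h1 (p.1, p.2) + h2 (-p.1, p.2) + h3 (-p.1, -p.2) + h4 (p.1, -p.2)) (by fun_prop) ?_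
    intro p hp
    exact indicator_of_mem hp _
  pos_ae := by
    rw [ae_restrict_iff' measurableSet_Sq]
    have a2 := reflX_mp.quasiMeasurePreserving.ae p2.pos_ae
    have a4 := reflY_mp.quasiMeasurePreserving.ae p4.pos_ae
    have a3 := (reflX_mp.comp reflY_mp).quasiMeasurePreserving.ae p3.pos_ae
    filter_upwards [p1.pos_ae, a2, a3, a4, ae_fst_ne_zero, ae_snd_ne_zero] with p a1 a2 a3 a4 hx hy
      hS
    change 0 < -p.1 → 0 < p.2 → 0 < h2 (-p.1, p.2) at a2
    change 0 < -p.1 → 0 < -p.2 → 0 < h3 (-p.1, -p.2) at a3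
    change 0 < p.1 → 0 < -p.2 → 0 < h4 (p.1, -p.2) at a4
    change 0 < p.1 → 0 < p.2 → 0 < h1 (p.1, p.2) at a1
    unfold glue
    rw [indicator_of_mem hS]
    have := p1.nonneg (p.1, p.2)
    have := p2.nonneg (-p.1, p.2)
    have := p3.nonneg (-p.1, -p.2)
    have := p4.nonneg (p.1, -p.2)
    rcases lt_or_gt_of_ne hx with hx | hx <;> rcases lt_or_gt_of_ne hy with hy | hy
    · have := a3 (by linarith) (by linarith)
      linarith
    · have := a2 (by linarith) (by linarith)
      linarith
    · have := a4 (by linarith) (by linarith)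
      linarith
    · have := a1 (by linarith) (by linarith)
      linarith

/-! ### Solving the equilibrium system -/

lemma eqnHolds_arctan {t num den k : ℝ} (hk : k ≠ 0) (hd : den ≠ 0) (h : num = t * den) :
    EqnHolds (arctan t) (num * k) (den * k) := by
  unfold EqnHolds
  rw [if_neg (mul_ne_zero hd hk), mul_div_mul_right _ _ hk, h, mul_div_cancel_right₀ _ hd]

/-- When the four half-square masses equal `1/2`, the factors `K1, K2, L1, L2` cancel, and the
system reduces to ratios of sector masses, independently of `n`. The tuple is invariant under the
reflection in the diagonal `x = y`, which exchanges the angles 1 and 5, 2 and 8, 3 and 7, 4 and 6;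
hence four of the eight equations repeat the other four. -/
lemma eqSysV_of_ratios {f : ℝ × ℝ → ℝ} (a : Q1p f = 1 / 2) (b : Q1m f = 1 / 2)
    (c : Q2p f = 1 / 2) (d : Q2m f = 1 / 2) (n : ℕ) {t1 t2 t3 t4 m1 m2 m3 m4 : ℝ}
    (r1 : 0 < m1) (r2 : 0 < m2) (r3 : 0 < m3) (r4 : 0 < m4)
    (i1 : I1 f (arctan t1) = m1) (i2 : I2 f (arctan t2) = m2) (i3 : I3 f (arctan t3) = m3)
    (i4 : I4 f (arctan t4) = m4) (i5 : I5 f (arctan t1) = m1) (i6 : I6 f (arctan t4) = m4)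
    (i7 : I7 f (arctan t3) = m3) (i8 : I8 f (arctan t2) = m2)
    (e1 : m4 + m3 = t1 * (m3 + m2)) (e2 : m1 + m2 = t2 * (m3 + m2))
    (e3 : m1 + m2 = t3 * (m1 + m4)) (e4 : m4 + m3 = t4 * (m1 + m4)) :
    EqSysV f n ![arctan t1, arctan t2, arctan t3, arctan t4, arctan t1, arctan t4, arctan t3,
      arctan t2] := by
  have k1 : K1 f n = (1 / 2) ^ ((n - 1) / 2) * (1 / 2) ^ ((n - 3) / 2) := by rw [K1, a, b]
  have k2 : K2 f n = (1 / 2) ^ ((n - 1) / 2) * (1 / 2) ^ ((n - 3) / 2) := by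
    rw [K2, a, b, mul_comm]
  have l1 : L1 f n = (1 / 2) ^ ((n - 1) / 2) * (1 / 2) ^ ((n - 3) / 2) := by
    rw [L1, c, d, mul_comm]
  have l2 : L2 f n = (1 / 2) ^ ((n - 1) / 2) * (1 / 2) ^ ((n - 3) / 2) := by rw [L2, c, d]
  have hk : ((1 : ℝ) / 2) ^ ((n - 1) / 2) * (1 / 2) ^ ((n - 3) / 2) ≠ 0 := by positivity
  change EqSys f n (arctan t1) (arctan t2) (arctan t3) (arctan t4) (arctan t1) (arctan t4)
    (arctan t3) (arctan t2)
  unfold EqSys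
  rw [k1, k2, l1, l2, i1, i2, i3, i4, i5, i6, i7, i8]
  refine ⟨?_, ?_, ?_, ?_, ?_, ?_, ?_, ?_⟩ <;>
    refine eqnHolds_arctan hk (by positivity) (by linarith)

lemma tuple_mem {t1 t2 t3 t4 : ℝ} (h1 : 0 < t1) (h2 : 0 < t2) (h3 : 0 < t3) (h4 : 0 < t4) :
    ∀ i, ![arctan t1, arctan t2, arctan t3, arctan t4, arctan t1, arctan t4, arctan t3,
      arctan t2] i ∈ Set.Icc (0 : ℝ) (π / 2) := by
  have key : ∀ t : ℝ, 0 < t → arctan t ∈ Set.Icc (0 : ℝ) (π / 2) := fun t ht =>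
    ⟨(arctan_pos.2 ht).le, (arctan_lt_pi_div_two t).le⟩
  intro i
  fin_cases i <;> exact key _ ‹_›

/-- There is a probability density on `[-1,1]²` (continuous, positive a.e.,
with all four half-square probabilities equal to `1/2`) for which, for every odd `n ≥ 3`,
the equilibrium system has at least two distinct non-trivial solutions; hence non-trivial
equilibria need not be unique. -/
theorem exists_density_with_two_nontrivial_equilibria :
    ∃ f : ℝ × ℝ → ℝ, IsNiceDensity f ∧
      Q1p f = 1 / 2 ∧ Q1m f = 1 / 2 ∧ Q2p f = 1 / 2 ∧ Q2m f = 1 / 2 ∧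
      ∀ n : ℕ, Odd n → 3 ≤ n →
        ∃ θ θ' : Fin 8 → ℝ, θ ≠ θ' ∧
          (∀ i, θ i ∈ Set.Icc (0 : ℝ) (π / 2)) ∧ EqSysV f n θ ∧ (∃ i, 0 < θ i) ∧
          (∀ i, θ' i ∈ Set.Icc (0 : ℝ) (π / 2)) ∧ EqSysV f n θ' ∧ (∃ i, 0 < θ' i) := by
  -- In units of 1/200, the sector masses (m1, m2, m3, m4) are (30, 30, 10, 40) in the first
  -- solution and (31, 31, 9, 55) in the second. In each quadrant the breakpoints are the slopes of
  -- the four rays bounding its sectors in the two solutions, and the weights are the increments.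
  obtain ⟨h1, p1, T1, -, -, b13, b14, a11, a12, -, -⟩ := exists_profile
    (s1 := 5 / 8) (s2 := 4 / 5) (s3 := 5 / 4) (s4 := 8 / 5)
    (w0 := 9 / 200) (w1 := 1 / 200) (w2 := 20 / 200) (w3 := 1 / 200) (w4 := 9 / 200)
    (by norm_num) (by norm_num) (by norm_num) (by norm_num) (by norm_num) (by norm_num)
    (by norm_num) (by norm_num) (by norm_num)
  obtain ⟨h2, p2, T2, -, -, b23, b24, a21, a22, -, -⟩ := exists_profile
    (s1 := 43 / 32) (s2 := 7 / 5) (s3 := 3 / 2) (s4 := 31 / 20)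
    (w0 := 5 / 200) (w1 := 15 / 200) (w2 := 10 / 200) (w3 := 1 / 200) (w4 := 29 / 200)
    (by norm_num) (by norm_num) (by norm_num) (by norm_num) (by norm_num) (by norm_num)
    (by norm_num) (by norm_num) (by norm_num)
  obtain ⟨h3, p3, T3, b31, b32, -, -, -, -, a33, a34⟩ := exists_profile
    (s1 := 31 / 43) (s2 := 6 / 7) (s3 := 7 / 6) (s4 := 43 / 31)
    (w0 := 9 / 200) (w1 := 1 / 200) (w2 := 20 / 200) (w3 := 1 / 200) (w4 := 9 / 200)
    (by norm_num) (by norm_num) (by norm_num) (by norm_num) (by norm_num) (by norm_num)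
    (by norm_num) (by norm_num) (by norm_num)
  obtain ⟨h4, p4, T4, -, -, b43, b44, a41, a42, -, -⟩ := exists_profile
    (s1 := 20 / 31) (s2 := 2 / 3) (s3 := 5 / 7) (s4 := 32 / 43)
    (w0 := 29 / 200) (w1 := 1 / 200) (w2 := 10 / 200) (w3 := 15 / 200) (w4 := 5 / 200)
    (by norm_num) (by norm_num) (by norm_num) (by norm_num) (by norm_num) (by norm_num)
    (by norm_num) (by norm_num) (by norm_num)
  have q1 : Q1p (glue h1 h2 h3 h4) = 1 / 2 := by rw [Q1p_glue p1 p2 p3 p4, T1, T4]; norm_num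
  have q2 : Q1m (glue h1 h2 h3 h4) = 1 / 2 := by rw [Q1m_glue p1 p2 p3 p4, T2, T3]; norm_num
  have q3 : Q2p (glue h1 h2 h3 h4) = 1 / 2 := by rw [Q2p_glue p1 p2 p3 p4, T1, T2]; norm_num
  have q4 : Q2m (glue h1 h2 h3 h4) = 1 / 2 := by rw [Q2m_glue p1 p2 p3 p4, T4, T3]; norm_num
  rw [inv_div] at a11 a12 a21 a22 a33 a34 a41 a42
  refine ⟨glue h1 h2 h3 h4, glue_nice p1 p2 p3 p4 (by rw [q1, q2]; norm_num), q1, q2, q3, q4,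
    fun n _ _ => ?_⟩
  refine ⟨_, _, ?_, tuple_mem (t1 := 5 / 4) (t2 := 3 / 2) (t3 := 6 / 7) (t4 := 5 / 7)
      (by norm_num) (by norm_num) (by norm_num) (by norm_num),
    eqSysV_of_ratios (m1 := 30 / 200) (m2 := 30 / 200) (m3 := 10 / 200) (m4 := 40 / 200)
      q1 q2 q3 q4 n (by norm_num) (by norm_num) (by norm_num) (by norm_num)
      ?_ ?_ ?_ ?_ ?_ ?_ ?_ ?_ (by norm_num) (by norm_num) (by norm_num) (by norm_num),
    ⟨0, arctan_pos.2 (by norm_num)⟩,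
    tuple_mem (t1 := 8 / 5) (t2 := 31 / 20) (t3 := 31 / 43) (t4 := 32 / 43)
      (by norm_num) (by norm_num) (by norm_num) (by norm_num),
    eqSysV_of_ratios (m1 := 31 / 200) (m2 := 31 / 200) (m3 := 9 / 200) (m4 := 55 / 200)
      q1 q2 q3 q4 n (by norm_num) (by norm_num) (by norm_num) (by norm_num)
      ?_ ?_ ?_ ?_ ?_ ?_ ?_ ?_ (by norm_num) (by norm_num) (by norm_num) (by norm_num),
    ⟨0, arctan_pos.2 (by norm_num)⟩⟩
  · intro h
    have := arctan_injective (congrFun h 0)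
    norm_num at this
  · rw [I1_glue _ p1 p2 p3 p4, b13]; norm_num
  · rw [I2_glue _ p1 p2 p3 p4, b23]; norm_num
  · rw [I3_glue _ p1 p2 p3 p4, b32]; norm_num
  · rw [I4_glue _ p1 p2 p3 p4, b43]; norm_num
  · rw [I5_glue _ p1 p2 p3 p4, a12]; norm_num
  · rw [I6_glue _ p1 p2 p3 p4, a22]; norm_num
  · rw [I7_glue _ p1 p2 p3 p4, a33]; norm_num
  · rw [I8_glue _ p1 p2 p3 p4, a42]; norm_num
  · rw [I1_glue _ p1 p2 p3 p4, b14]; norm_num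
  · rw [I2_glue _ p1 p2 p3 p4, b24]; norm_num
  · rw [I3_glue _ p1 p2 p3 p4, b31]
  · rw [I4_glue _ p1 p2 p3 p4, b44]; norm_num
  · rw [I5_glue _ p1 p2 p3 p4, a11]; norm_num
  · rw [I6_glue _ p1 p2 p3 p4, a21]; norm_num
  · rw [I7_glue _ p1 p2 p3 p4, a34]
  · rw [I8_glue _ p1 p2 p3 p4, a41]; norm_num
end
end

section
/- Let f(x,y) = |x|·|y| on [-1,1]² (a probability density modelling a group of predominantly passionate voters) and let n = 11. Then the naive angles θ1 = ⋯ = θ8 = π/4 solve the equilibrium system, and no offered trade of any type k ∈ {1,…,8} is beneficial: for every k and every (u1,u2) ∈ Rk(π/4), the type-k beneficial condition fails. -/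
/-!
Every quantity in the statement is a zeroth or first moment, with respect to the density `|x||y|`,
of a triangle `Rk(π/4)`, a union of two of them, or a half of the square. The density is invariant
under the reflections in the two axes and in the diagonal, and these permute the eight triangles
and the four half-squares; so it is enough to integrate over `{0 < y < x ≤ 1}` (mass `1/8`,
`∫ x f = 1/10`, `∫ y f = 1/15`) and over the right half-square (mass `1/2`, `∫ x f = 1/3`).

All masses of the same kind being equal, every ratio in the equilibrium system is `1`, and
`arctan 1 = π/4`. In the benefit conditions the ratios `a/c` are also `1`, the constants
`b1, b2, d1, d3` and `b5, b7, d5, d6` are `±6/5` or `±2/15`, and each condition asks that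
`||u1| - |u2|| > 16/15`, which is impossible as `|u1|, |u2| ≤ 1` on the regions.
-/

open MeasureTheory Real Set

noncomputable section

/-- `∫_{x<0} x·f` over the square. -/
def XnegInt (f : ℝ × ℝ → ℝ) : ℝ := ∫ p in {p ∈ Sq | p.1 < 0}, p.1 * f p
def XposInt (f : ℝ × ℝ → ℝ) : ℝ := ∫ p in {p ∈ Sq | 0 < p.1}, p.1 * f p
def YnegInt (f : ℝ × ℝ → ℝ) : ℝ := ∫ p in {p ∈ Sq | p.2 < 0}, p.2 * f p
def YposInt (f : ℝ × ℝ → ℝ) : ℝ := ∫ p in {p ∈ Sq | 0 < p.2}, p.2 * f p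

def b1 (f : ℝ × ℝ → ℝ) (n : ℕ) (θ6 θ7 : ℝ) : ℝ :=
  (I6 f θ6 + I7 f θ7)⁻¹ * (∫ p in R6 θ6 ∪ R7 θ7, p.1 * f p) +
    ((n : ℝ) - 1) / 2 * (Q1m f)⁻¹ * XnegInt f +
    ((n : ℝ) - 3) / 2 * (Q1p f)⁻¹ * XposInt f

def b2 (f : ℝ × ℝ → ℝ) (n : ℕ) (θ5 θ8 : ℝ) : ℝ :=
  (I5 f θ5 + I8 f θ8)⁻¹ * (∫ p in R5 θ5 ∪ R8 θ8, p.1 * f p) +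
    ((n : ℝ) - 3) / 2 * (Q1m f)⁻¹ * XnegInt f +
    ((n : ℝ) - 1) / 2 * (Q1p f)⁻¹ * XposInt f

def d1 (f : ℝ × ℝ → ℝ) (n : ℕ) (θ7 θ8 : ℝ) : ℝ :=
  (I7 f θ7 + I8 f θ8)⁻¹ * (∫ p in R7 θ7 ∪ R8 θ8, p.2 * f p) +
    ((n : ℝ) - 3) / 2 * (Q2m f)⁻¹ * YnegInt f +
    ((n : ℝ) - 1) / 2 * (Q2p f)⁻¹ * YposInt f

def d3 (f : ℝ × ℝ → ℝ) (n : ℕ) (θ5 θ6 : ℝ) : ℝ :=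
  (I5 f θ5 + I6 f θ6)⁻¹ * (∫ p in R5 θ5 ∪ R6 θ6, p.2 * f p) +
    ((n : ℝ) - 1) / 2 * (Q2m f)⁻¹ * YnegInt f +
    ((n : ℝ) - 3) / 2 * (Q2p f)⁻¹ * YposInt f

def b5 (f : ℝ × ℝ → ℝ) (n : ℕ) (θ3 θ4 : ℝ) : ℝ :=
  (I3 f θ3 + I4 f θ4)⁻¹ * (∫ p in R3 θ3 ∪ R4 θ4, p.2 * f p) +
    ((n : ℝ) - 1) / 2 * (Q2m f)⁻¹ * YnegInt f +
    ((n : ℝ) - 3) / 2 * (Q2p f)⁻¹ * YposInt f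

def b7 (f : ℝ × ℝ → ℝ) (n : ℕ) (θ1 θ2 : ℝ) : ℝ :=
  (I1 f θ1 + I2 f θ2)⁻¹ * (∫ p in R1 θ1 ∪ R2 θ2, p.2 * f p) +
    ((n : ℝ) - 3) / 2 * (Q2m f)⁻¹ * YnegInt f +
    ((n : ℝ) - 1) / 2 * (Q2p f)⁻¹ * YposInt f

def d5 (f : ℝ × ℝ → ℝ) (n : ℕ) (θ2 θ3 : ℝ) : ℝ :=
  (I2 f θ2 + I3 f θ3)⁻¹ * (∫ p in R2 θ2 ∪ R3 θ3, p.1 * f p) +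
    ((n : ℝ) - 3) / 2 * (Q1m f)⁻¹ * XnegInt f +
    ((n : ℝ) - 1) / 2 * (Q1p f)⁻¹ * XposInt f

def d6 (f : ℝ × ℝ → ℝ) (n : ℕ) (θ1 θ4 : ℝ) : ℝ :=
  (I1 f θ1 + I4 f θ4)⁻¹ * (∫ p in R1 θ1 ∪ R4 θ4, p.1 * f p) +
    ((n : ℝ) - 1) / 2 * (Q1m f)⁻¹ * XnegInt f +
    ((n : ℝ) - 3) / 2 * (Q1p f)⁻¹ * XposInt f

def a1 (f : ℝ × ℝ → ℝ) (n : ℕ) (θ6 θ7 : ℝ) : ℝ := (I6 f θ6 + I7 f θ7) * K1 f n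
def a2 (f : ℝ × ℝ → ℝ) (n : ℕ) (θ5 θ8 : ℝ) : ℝ := (I5 f θ5 + I8 f θ8) * K2 f n
def c1 (f : ℝ × ℝ → ℝ) (n : ℕ) (θ7 θ8 : ℝ) : ℝ := (I7 f θ7 + I8 f θ8) * L1 f n
def c3 (f : ℝ × ℝ → ℝ) (n : ℕ) (θ5 θ6 : ℝ) : ℝ := (I5 f θ5 + I6 f θ6) * L2 f n
def a5 (f : ℝ × ℝ → ℝ) (n : ℕ) (θ3 θ4 : ℝ) : ℝ := (I3 f θ3 + I4 f θ4) * L2 f n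
def a7 (f : ℝ × ℝ → ℝ) (n : ℕ) (θ1 θ2 : ℝ) : ℝ := (I1 f θ1 + I2 f θ2) * L1 f n
def c5 (f : ℝ × ℝ → ℝ) (n : ℕ) (θ2 θ3 : ℝ) : ℝ := (I2 f θ2 + I3 f θ3) * K2 f n
def c6 (f : ℝ × ℝ → ℝ) (n : ℕ) (θ1 θ4 : ℝ) : ℝ := (I1 f θ1 + I4 f θ4) * K1 f n

/-- A type-1 offered trade at `(u1,u2) ∈ R1(θ1)` has positive expected group value. -/
def Ben1 (f : ℝ × ℝ → ℝ) (n : ℕ) (θ5 θ6 θ7 θ8 : ℝ) (p : ℝ × ℝ) : Prop :=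
  p.2 < a1 f n θ6 θ7 / c1 f n θ7 θ8 * p.1 +
    a1 f n θ6 θ7 * b1 f n θ6 θ7 / c1 f n θ7 θ8 - d1 f n θ7 θ8

def Ben2 (f : ℝ × ℝ → ℝ) (n : ℕ) (θ5 θ6 θ7 θ8 : ℝ) (p : ℝ × ℝ) : Prop :=
  p.2 < -(a2 f n θ5 θ8 / c1 f n θ7 θ8) * p.1 -
    a2 f n θ5 θ8 * b2 f n θ5 θ8 / c1 f n θ7 θ8 - d1 f n θ7 θ8

def Ben3 (f : ℝ × ℝ → ℝ) (n : ℕ) (θ5 θ6 θ7 θ8 : ℝ) (p : ℝ × ℝ) : Prop :=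
  a2 f n θ5 θ8 / c3 f n θ5 θ6 * p.1 +
    a2 f n θ5 θ8 * b2 f n θ5 θ8 / c3 f n θ5 θ6 - d3 f n θ5 θ6 < p.2

def Ben4 (f : ℝ × ℝ → ℝ) (n : ℕ) (θ5 θ6 θ7 θ8 : ℝ) (p : ℝ × ℝ) : Prop :=
  -(a1 f n θ6 θ7 / c3 f n θ5 θ6) * p.1 -
    a1 f n θ6 θ7 * b1 f n θ6 θ7 / c3 f n θ5 θ6 - d3 f n θ5 θ6 < p.2

def Ben5 (f : ℝ × ℝ → ℝ) (n : ℕ) (θ1 θ2 θ3 θ4 : ℝ) (p : ℝ × ℝ) : Prop :=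
  c5 f n θ2 θ3 / a5 f n θ3 θ4 * p.1 +
    c5 f n θ2 θ3 * d5 f n θ2 θ3 / a5 f n θ3 θ4 - b5 f n θ3 θ4 < p.2

def Ben6 (f : ℝ × ℝ → ℝ) (n : ℕ) (θ1 θ2 θ3 θ4 : ℝ) (p : ℝ × ℝ) : Prop :=
  -(c6 f n θ1 θ4 / a5 f n θ3 θ4) * p.1 -
    c6 f n θ1 θ4 * d6 f n θ1 θ4 / a5 f n θ3 θ4 - b5 f n θ3 θ4 < p.2

def Ben7 (f : ℝ × ℝ → ℝ) (n : ℕ) (θ1 θ2 θ3 θ4 : ℝ) (p : ℝ × ℝ) : Prop :=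
  p.2 < c6 f n θ1 θ4 / a7 f n θ1 θ2 * p.1 +
    c6 f n θ1 θ4 * d6 f n θ1 θ4 / a7 f n θ1 θ2 - b7 f n θ1 θ2

def Ben8 (f : ℝ × ℝ → ℝ) (n : ℕ) (θ1 θ2 θ3 θ4 : ℝ) (p : ℝ × ℝ) : Prop :=
  p.2 < -(c5 f n θ2 θ3 / a7 f n θ1 θ2) * p.1 -
    c5 f n θ2 θ3 * d5 f n θ2 θ3 / a7 f n θ1 θ2 - b7 f n θ1 θ2

/-- The "passionate voters" density `|x|·|y|` on `[-1,1]²`. -/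
def fpassion : ℝ × ℝ → ℝ := Sq.indicator fun p => |p.1| * |p.2|

/-- `S` is a measurable set whose moments against the density `fpassion` are `∫ f = a`,
`∫ x f = b` and `∫ y f = c`. -/
structure Mom (S : Set (ℝ × ℝ)) (a b c : ℝ) : Prop where
  meas : MeasurableSet S
  mass : ∫ p in S, fpassion p = a
  mx : ∫ p in S, p.1 * fpassion p = b
  my : ∫ p in S, p.2 * fpassion p = c

/-! ### Symmetries of the density -/

lemma fpassion_negX (x y : ℝ) : fpassion (-x, y) = fpassion (x, y) := by
  have h : (-x, y) ∈ Sq ↔ (x, y) ∈ Sq := by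
    simp only [Sq, mem_prod, mem_Icc]; grind
  by_cases hx : (x, y) ∈ Sq
  · simp [fpassion, hx, h.2 hx]
  · simp [fpassion, hx, mt h.1 hx]

lemma fpassion_swap (x y : ℝ) : fpassion (y, x) = fpassion (x, y) := by
  have h : (y, x) ∈ Sq ↔ (x, y) ∈ Sq := by
    simp only [Sq, mem_prod, mem_Icc]; grind
  by_cases hx : (x, y) ∈ Sq
  · simp [fpassion, hx, h.2 hx, mul_comm]
  · simp [fpassion, hx, mt h.1 hx]

/-- Change of variables under the reflection in the vertical axis. -/
lemma setIntegral_negX (S : Set (ℝ × ℝ)) (g : ℝ × ℝ → ℝ) :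
    ∫ p in {p : ℝ × ℝ | (-p.1, p.2) ∈ S}, g (-p.1, p.2) = ∫ p in S, g p := by
  have hmp : MeasurePreserving (Prod.map (fun x : ℝ => -x) (id : ℝ → ℝ))
      (volume : Measure (ℝ × ℝ)) volume :=
    (Measure.measurePreserving_neg (volume : Measure ℝ)).prod (MeasurePreserving.id _)
  have he : MeasurableEmbedding (Prod.map (fun x : ℝ => -x) (id : ℝ → ℝ)) :=
    ((MeasurableEquiv.neg ℝ).prodCongr (MeasurableEquiv.refl ℝ)).measurableEmbedding
  exact hmp.setIntegral_preimage_emb he g S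

/-- Change of variables under the reflection in the diagonal. -/
lemma setIntegral_swap (S : Set (ℝ × ℝ)) (g : ℝ × ℝ → ℝ) :
    ∫ p in {p : ℝ × ℝ | (p.2, p.1) ∈ S}, g (p.2, p.1) = ∫ p in S, g p :=
  (Measure.measurePreserving_swap (μ := (volume : Measure ℝ))
    (ν := (volume : Measure ℝ))).setIntegral_preimage_emb
    MeasurableEquiv.prodComm.measurableEmbedding g S

lemma Mom.negX {S T : Set (ℝ × ℝ)} {a b c : ℝ} (h : Mom S a b c)
    (hT : ∀ x y, (x, y) ∈ T ↔ (-x, y) ∈ S) : Mom T a (-b) c := by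
  have e : T = {p : ℝ × ℝ | (-p.1, p.2) ∈ S} := by ext ⟨x, y⟩; exact hT x y
  subst e
  refine ⟨h.meas.preimage (by fun_prop), ?_, ?_, ?_⟩
  · rw [← h.mass, ← setIntegral_negX S]; simp only [fpassion_negX]
  · rw [← h.mx, ← setIntegral_negX S]; simp only [fpassion_negX, neg_mul, integral_neg, neg_neg]
  · rw [← h.my, ← setIntegral_negX S]; simp only [fpassion_negX]

lemma Mom.swap {S T : Set (ℝ × ℝ)} {a b c : ℝ} (h : Mom S a b c)
    (hT : ∀ x y, (x, y) ∈ T ↔ (y, x) ∈ S) : Mom T a c b := by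
  have e : T = {p : ℝ × ℝ | (p.2, p.1) ∈ S} := by ext ⟨x, y⟩; exact hT x y
  have hf (p : ℝ × ℝ) : fpassion (p.2, p.1) = fpassion p := fpassion_swap p.1 p.2
  subst e
  refine ⟨h.meas.preimage (by fun_prop), ?_, ?_, ?_⟩
  · rw [← h.mass, ← setIntegral_swap S]; simp only [hf]
  · rw [← h.my, ← setIntegral_swap S]; simp only [hf]
  · rw [← h.mx, ← setIntegral_swap S]; simp only [hf]

/-- The reflection in the horizontal axis is the one in the vertical axis conjugated by the
diagonal reflection. -/
lemma Mom.negY {S T : Set (ℝ × ℝ)} {a b c : ℝ} (h : Mom S a b c)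
    (hT : ∀ x y, (x, y) ∈ T ↔ (x, -y) ∈ S) : Mom T a b (-c) :=
  ((h.swap (T := {p | (p.2, p.1) ∈ S}) fun _ _ => Iff.rfl).negX
    (T := {p | (p.2, -p.1) ∈ S}) fun _ _ => Iff.rfl).swap hT

lemma integrable_mul_fpassion (g : ℝ × ℝ → ℝ) (hg : Continuous g) :
    Integrable fun p => g p * fpassion p := by
  have e : (fun p => g p * fpassion p) = Sq.indicator fun p => g p * (|p.1| * |p.2|) := by
    ext p
    by_cases hp : p ∈ Sq <;> simp [fpassion, hp]
  have hc : IsCompact Sq := isCompact_Icc.prod isCompact_Icc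
  rw [e, integrable_indicator_iff hc.measurableSet]
  exact ContinuousOn.integrableOn_compact hc (by fun_prop)

lemma Mom.union {S T : Set (ℝ × ℝ)} {a b c a' b' c' : ℝ} (h : Mom S a b c) (h' : Mom T a' b' c')
    (hd : ∀ p ∈ S, p ∉ T) : Mom (S ∪ T) (a + a') (b + b') (c + c') := by
  have d : Disjoint S T := Set.disjoint_left.2 hd
  have i0 : Integrable fpassion := by
    simpa using integrable_mul_fpassion (fun _ => 1) (by fun_prop)
  have i1 := integrable_mul_fpassion Prod.fst (by fun_prop)
  have i2 := integrable_mul_fpassion Prod.snd (by fun_prop)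
  refine ⟨h.meas.union h'.meas, ?_, ?_, ?_⟩
  · rw [setIntegral_union d h'.meas i0.integrableOn i0.integrableOn, h.mass, h'.mass]
  · rw [setIntegral_union d h'.meas i1.integrableOn i1.integrableOn, h.mx, h'.mx]
  · rw [setIntegral_union d h'.meas i2.integrableOn i2.integrableOn, h.my, h'.my]

/-! ### The two basic integrals -/

lemma pi_quarter_ne : ¬ (π / 4 = π / 2) := by
  have := Real.pi_pos
  intro h
  linarith

lemma integral_triangle (i j : ℕ) :
    ∫ p in R1 (π / 4), p.1 ^ i * p.2 ^ j = 1 / (((j : ℝ) + 1) * (i + j + 2)) := by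
  have hm : MeasurableSet (R1 (π / 4)) := by
    simp only [R1, pi_quarter_ne, false_or, tan_pi_div_four, mul_one]
    measurability
  have hi : IntegrableOn (fun p : ℝ × ℝ => p.1 ^ i * p.2 ^ j) (R1 (π / 4)) := by
    have hc : IsCompact Sq := isCompact_Icc.prod isCompact_Icc
    refine IntegrableOn.mono_set (ContinuousOn.integrableOn_compact hc (by fun_prop)) ?_
    rintro ⟨x, y⟩ hp
    simp only [R1, pi_quarter_ne, false_or, tan_pi_div_four, mul_one, mem_ofPred_eq] at hp
    simp only [Sq, mem_prod, mem_Icc]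
    grind
  rw [← integral_indicator hm, Measure.volume_eq_prod, integral_prod]
  · have inner (x : ℝ) : ∫ y, (R1 (π / 4)).indicator (fun p : ℝ × ℝ => p.1 ^ i * p.2 ^ j) (x, y)
        = (Ioc (0 : ℝ) 1).indicator (fun x => x ^ (i + j + 1) / (j + 1)) x := by
      by_cases hx : x ∈ Ioc (0 : ℝ) 1
      · have e : (fun y => (R1 (π / 4)).indicator (fun p : ℝ × ℝ => p.1 ^ i * p.2 ^ j) (x, y))
            = (Ioo 0 x).indicator fun y => x ^ i * y ^ j := by
          ext y
          simp only [indicator, R1, pi_quarter_ne, false_or, tan_pi_div_four, mul_one,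
            mem_ofPred_eq, hx.1, hx.2, true_and, mem_Ioo]
        rw [e, integral_indicator measurableSet_Ioo, ← integral_Ioc_eq_integral_Ioo,
          ← intervalIntegral.integral_of_le hx.1.le, intervalIntegral.integral_const_mul,
          integral_pow, indicator_of_mem hx]
        simp only [ne_eq, Nat.succ_ne_zero, not_false_eq_true, zero_pow, sub_zero]
        ring
      · rw [indicator_of_notMem hx]
        have e (y : ℝ) : (x, y) ∉ R1 (π / 4) := fun h => hx ⟨h.1, h.2.1⟩
        simp [e]
    simp only [inner]
    rw [integral_indicator measurableSet_Ioc, ← intervalIntegral.integral_of_le zero_le_one,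
      intervalIntegral.integral_div, integral_pow]
    simp only [ne_eq, Nat.succ_ne_zero, not_false_eq_true, zero_pow, sub_zero, one_pow]
    push_cast
    field_simp
    ring
  · exact (integrable_indicator_iff hm).2 hi

lemma mom1 : Mom (R1 (π / 4)) (1 / 8) (1 / 10) (1 / 15) := by
  have hm : MeasurableSet (R1 (π / 4)) := by
    simp only [R1, pi_quarter_ne, false_or, tan_pi_div_four, mul_one]
    measurability
  have hf : ∀ p ∈ R1 (π / 4), fpassion p = p.1 * p.2 := by
    rintro ⟨x, y⟩ hp
    simp only [R1, pi_quarter_ne, false_or, tan_pi_div_four, mul_one, mem_ofPred_eq] at hp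
    have hS : (x, y) ∈ Sq := by
      simp only [Sq, mem_prod, mem_Icc]
      grind
    simp [fpassion, hS, abs_of_pos hp.1, abs_of_pos hp.2.2.1]
  refine ⟨hm, ?_, ?_, ?_⟩
  · have h := integral_triangle 1 1
    rw [setIntegral_congr_fun hm (g := fun p => p.1 ^ 1 * p.2 ^ 1)
      (fun p hp => by simp only [hf p hp]; ring), h]
    norm_num
  · have h := integral_triangle 2 1
    rw [setIntegral_congr_fun hm (g := fun p => p.1 ^ 2 * p.2 ^ 1)
      (fun p hp => by simp only [hf p hp]; ring), h]
    norm_num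
  · have h := integral_triangle 1 2
    rw [setIntegral_congr_fun hm (g := fun p => p.1 ^ 1 * p.2 ^ 2)
      (fun p hp => by simp only [hf p hp]; ring), h]
    norm_num

lemma integral_Icc_abs_mul (k : ℕ) :
    ∫ y in Icc (-1 : ℝ) 1, y ^ k * |y| = ((-1) ^ k + 1) / (k + 2) := by
  have hi (a b : ℝ) : IntervalIntegrable (fun y : ℝ => y ^ k * |y|) volume a b :=
    Continuous.intervalIntegrable (by fun_prop) a b
  rw [integral_Icc_eq_integral_Ioc, ← intervalIntegral.integral_of_le (by norm_num),
    ← intervalIntegral.integral_add_adjacent_intervals (hi (-1) 0) (hi 0 1)]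
  have e1 : ∫ y in (-1 : ℝ)..0, y ^ k * |y| = ∫ y in (-1 : ℝ)..0, -y ^ (k + 1) := by
    refine intervalIntegral.integral_congr fun y hy => ?_
    rw [uIcc_of_le (by norm_num)] at hy
    simp only [abs_of_nonpos hy.2]
    ring
  have e2 : ∫ y in (0 : ℝ)..1, y ^ k * |y| = ∫ y in (0 : ℝ)..1, y ^ (k + 1) := by
    refine intervalIntegral.integral_congr fun y hy => ?_
    rw [uIcc_of_le (by norm_num)] at hy
    simp only [abs_of_nonneg hy.1]
    ring
  rw [e1, e2, intervalIntegral.integral_neg, integral_pow, integral_pow]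
  simp only [ne_eq, Nat.succ_ne_zero, not_false_eq_true, zero_pow, one_pow]
  push_cast
  field_simp
  ring

lemma integral_Ioc_pow_mul_abs (k : ℕ) :
    ∫ x in Ioc (0 : ℝ) 1, x ^ k * |x| = 1 / (k + 2) := by
  rw [setIntegral_congr_fun measurableSet_Ioc (g := fun x => x ^ (k + 1))
      (fun x hx => by simp only [abs_of_pos hx.1]; ring),
    ← intervalIntegral.integral_of_le zero_le_one, integral_pow]
  simp only [ne_eq, Nat.succ_ne_zero, not_false_eq_true, zero_pow, one_pow]
  push_cast
  ring

lemma momRight : Mom {p ∈ Sq | 0 < p.1} (1 / 2) (1 / 3) 0 := by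
  have e : {p ∈ Sq | 0 < p.1} = Ioc (0 : ℝ) 1 ×ˢ Icc (-1 : ℝ) 1 := by
    ext ⟨x, y⟩
    simp only [Sq, mem_ofPred_eq, mem_prod, mem_Icc, mem_Ioc]
    grind
  have hm : MeasurableSet (Ioc (0 : ℝ) 1 ×ˢ Icc (-1 : ℝ) 1) :=
    measurableSet_Ioc.prod measurableSet_Icc
  have hf : ∀ p ∈ Ioc (0 : ℝ) 1 ×ˢ Icc (-1 : ℝ) 1, fpassion p = |p.1| * |p.2| := by
    intro p hp
    rw [← e] at hp
    simp [fpassion, hp.1]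
  have key (i j : ℕ) : ∫ p in Ioc (0 : ℝ) 1 ×ˢ Icc (-1 : ℝ) 1, p.1 ^ i * p.2 ^ j * fpassion p
      = 1 / (i + 2) * (((-1) ^ j + 1) / (j + 2)) := by
    rw [setIntegral_congr_fun hm (g := fun p => (p.1 ^ i * |p.1|) * (p.2 ^ j * |p.2|))
      (fun p hp => by simp only [hf p hp]; ring), Measure.volume_eq_prod,
      setIntegral_prod_mul (fun x : ℝ => x ^ i * |x|) (fun y : ℝ => y ^ j * |y|),
      integral_Ioc_pow_mul_abs, integral_Icc_abs_mul]
  rw [e]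
  refine ⟨hm, ?_, ?_, ?_⟩
  · simpa using key 0 0
  · have := key 1 0
    norm_num at this ⊢
    exact this
  · simpa using key 0 1

/-! ### Moments of the other regions -/

lemma mom2 : Mom (R2 (π / 4)) (1 / 8) (-(1 / 10)) (1 / 15) :=
  mom1.negX fun x y => by
    simp only [R1, R2, pi_quarter_ne, false_or, tan_pi_div_four, mul_one, mem_ofPred_eq]
    grind

lemma mom3 : Mom (R3 (π / 4)) (1 / 8) (-(1 / 10)) (-(1 / 15)) :=
  mom2.negY fun x y => by simp only [R2, R3, mem_ofPred_eq]

lemma mom4 : Mom (R4 (π / 4)) (1 / 8) (1 / 10) (-(1 / 15)) :=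
  mom1.negY fun x y => by simp only [R1, R4, mem_ofPred_eq]

lemma mom5 : Mom (R5 (π / 4)) (1 / 8) (1 / 15) (1 / 10) :=
  mom1.swap fun x y => by simp only [R1, R5, mem_ofPred_eq]

lemma mom6 : Mom (R6 (π / 4)) (1 / 8) (-(1 / 15)) (1 / 10) :=
  mom4.swap fun x y => by simp only [R4, R6, mem_ofPred_eq]

lemma mom7 : Mom (R7 (π / 4)) (1 / 8) (-(1 / 15)) (-(1 / 10)) :=
  mom3.swap fun x y => by simp only [R3, R7, mem_ofPred_eq]

lemma mom8 : Mom (R8 (π / 4)) (1 / 8) (1 / 15) (-(1 / 10)) :=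
  mom2.swap fun x y => by simp only [R2, R8, mem_ofPred_eq]

lemma momLeft : Mom {p ∈ Sq | p.1 < 0} (1 / 2) (-(1 / 3)) 0 :=
  momRight.negX fun x y => by
    simp only [Sq, mem_ofPred_eq, mem_prod, mem_Icc]
    grind

lemma momTop : Mom {p ∈ Sq | 0 < p.2} (1 / 2) 0 (1 / 3) :=
  momRight.swap fun x y => by
    simp only [Sq, mem_ofPred_eq, mem_prod, mem_Icc]
    grind

lemma momBottom : Mom {p ∈ Sq | p.2 < 0} (1 / 2) 0 (-(1 / 3)) :=
  momLeft.swap fun x y => by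
    simp only [Sq, mem_ofPred_eq, mem_prod, mem_Icc]
    grind

/-- For the density `|x|·|y|` on `[-1,1]²` with `n = 11`, the naive
angles `θᵢ = π/4` solve the equilibrium system, and no offered trade of any of the
eight types is beneficial. -/
theorem passionate_no_beneficial_trades :
    EqSys fpassion 11 (π / 4) (π / 4) (π / 4) (π / 4) (π / 4) (π / 4) (π / 4) (π / 4) ∧
    (∀ p ∈ R1 (π / 4), ¬ Ben1 fpassion 11 (π / 4) (π / 4) (π / 4) (π / 4) p) ∧
    (∀ p ∈ R2 (π / 4), ¬ Ben2 fpassion 11 (π / 4) (π / 4) (π / 4) (π / 4) p) ∧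
    (∀ p ∈ R3 (π / 4), ¬ Ben3 fpassion 11 (π / 4) (π / 4) (π / 4) (π / 4) p) ∧
    (∀ p ∈ R4 (π / 4), ¬ Ben4 fpassion 11 (π / 4) (π / 4) (π / 4) (π / 4) p) ∧
    (∀ p ∈ R5 (π / 4), ¬ Ben5 fpassion 11 (π / 4) (π / 4) (π / 4) (π / 4) p) ∧
    (∀ p ∈ R6 (π / 4), ¬ Ben6 fpassion 11 (π / 4) (π / 4) (π / 4) (π / 4) p) ∧
    (∀ p ∈ R7 (π / 4), ¬ Ben7 fpassion 11 (π / 4) (π / 4) (π / 4) (π / 4) p) ∧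
    (∀ p ∈ R8 (π / 4), ¬ Ben8 fpassion 11 (π / 4) (π / 4) (π / 4) (π / 4) p) := by
  have u67 := mom6.union mom7 fun p hp hq => by
    simp only [R6, R7, mem_ofPred_eq] at hp hq; grind
  have u58 := mom5.union mom8 fun p hp hq => by
    simp only [R5, R8, mem_ofPred_eq] at hp hq; grind
  have u78 := mom7.union mom8 fun p hp hq => by
    simp only [R7, R8, mem_ofPred_eq] at hp hq; grind
  have u56 := mom5.union mom6 fun p hp hq => by
    simp only [R5, R6, mem_ofPred_eq] at hp hq; grind
  have u34 := mom3.union mom4 fun p hp hq => by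
    simp only [R3, R4, mem_ofPred_eq] at hp hq; grind
  have u12 := mom1.union mom2 fun p hp hq => by
    simp only [R1, R2, mem_ofPred_eq] at hp hq; grind
  have u23 := mom2.union mom3 fun p hp hq => by
    simp only [R2, R3, mem_ofPred_eq] at hp hq; grind
  have u14 := mom1.union mom4 fun p hp hq => by
    simp only [R1, R4, mem_ofPred_eq] at hp hq; grind
  refine ⟨?_, ?_, ?_, ?_, ?_, ?_, ?_, ?_, ?_⟩
  · simp only [EqSys, EqnHolds, I1, I2, I3, I4, I5, I6, I7, I8, K1, K2, L1, L2,
      Q1m, Q1p, Q2m, Q2p, mom1.mass, mom2.mass, mom3.mass, mom4.mass, mom5.mass, mom6.mass,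
      mom7.mass, mom8.mass, momLeft.mass, momRight.mass, momTop.mass, momBottom.mass]
    norm_num [arctan_one]
  all_goals
    rintro ⟨x, y⟩ hp hB
    simp only [R1, R2, R3, R4, R5, R6, R7, R8, pi_quarter_ne, false_or, tan_pi_div_four, mul_one,
      mem_ofPred_eq] at hp
    simp only [Ben1, Ben2, Ben3, Ben4, Ben5, Ben6, Ben7, Ben8, a1, a2, c1, c3, a5, a7, c5, c6,
      b1, b2, d1, d3, b5, b7, d5, d6, I1, I2, I3, I4, I5, I6, I7, I8, K1, K2, L1, L2,
      Q1m, Q1p, Q2m, Q2p, XnegInt, XposInt, YnegInt, YposInt,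
      mom1.mass, mom2.mass, mom3.mass, mom4.mass, mom5.mass, mom6.mass,
      mom7.mass, mom8.mass, momLeft.mass, momRight.mass, momTop.mass, momBottom.mass,
      momLeft.mx, momRight.mx, momTop.my, momBottom.my, u67.mx, u58.mx, u78.my, u56.my,
      u34.my, u12.my, u23.mx, u14.mx] at hB
    norm_num at hB
    obtain ⟨h1, h2, h3, h4⟩ := hp
    linarith
end
end

section
/- Let f(x,y) = (1−|x|)·(1−|y|) on [-1,1]² (a probability density modelling a group of predominantly uninterested voters) and let n = 11, with the naive angles θ1 = ⋯ = θ8 = π/4 (which solve the equilibrium system). Then a type-1 offered trade at (u1,u2) ∈ R1(π/4) is beneficial if and only if u2 < u1 − 2/5, and a type-4 offered trade at (u1,u2) ∈ R4(π/4) is beneficial if and only if u1 + u2 > 2/5. In particular, the set of beneficial offered trades has positive Lebesgue measure. -/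
/-!
The density `(1 - |x|)(1 - |y|)` is invariant under the symmetries of the square, and these
carry the triangle `0 < y < x ≤ 1`, which is `R1 (π / 4)`, onto each of the other seven regions.
So every quantity reduces to three integrals over that triangle, found by Fubini: mass `1 / 8`
(`mass_R1`), first moments `7 / 120` and `1 / 40` (`moment_fst_R1`, `moment_snd_R1`). Each half
square has mass `1 / 2` and first moment `± 1 / 6`, since the density is a product.

All eight masses being equal, numerator and denominator agree in every equilibrium equation,
which gives `θ = arctan 1 = π / 4`. For the same reason the slopes are `± 1`; the intercepts come
from `b1 = -8 / 15`, `d1 = -2 / 15` and `d3 = 2 / 15`. Finally the open rectangle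
`(4 / 5, 1) × (0, 1 / 5)` consists of beneficial trades of type 1, whence the positive measure.
-/

open MeasureTheory Real Set

noncomputable section

/-- The "uninterested voters" density `(1-|x|)(1-|y|)` on `[-1,1]²`. -/
def funint : ℝ × ℝ → ℝ := Sq.indicator fun p => (1 - |p.1|) * (1 - |p.2|)

/-! ### The density and the reference triangle -/

lemma tan_pi_div_four_region (x y : ℝ) : (π / 4 = π / 2 ∨ y < x * tan (π / 4)) ↔ y < x := by
  have h : π / 4 ≠ π / 2 := by
    have := pi_pos
    intro h
    linarith
  simp [h, tan_pi_div_four]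

lemma funint_eq {x y : ℝ} (hx : |x| ≤ 1) (hy : |y| ≤ 1) :
    funint (x, y) = (1 - |x|) * (1 - |y|) := by
  have h : (x, y) ∈ Sq := ⟨abs_le.mp hx, abs_le.mp hy⟩
  simp [funint, h]

lemma mem_Sq_iff (p : ℝ × ℝ) : p ∈ Sq ↔ |p.1| ≤ 1 ∧ |p.2| ≤ 1 := by
  simp only [Sq, mem_prod, mem_Icc, abs_le]

lemma funint_of_abs {x y x' y' : ℝ} (hx : |x| = |x'|) (hy : |y| = |y'|) :
    funint (x, y) = funint (x', y') := by
  simp only [funint, indicator, mem_Sq_iff, hx, hy]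

lemma funint_swap (x y : ℝ) : funint (x, y) = funint (y, x) := by
  simp only [funint, indicator, mem_Sq_iff, and_comm, mul_comm]

/-- A continuous weight times the density is a continuous function cut off to a compact set. -/
lemma integrable_mul_funint {w : ℝ × ℝ → ℝ} (hw : Continuous w) :
    Integrable (fun p => w p * funint p) := by
  have hc : IsCompact Sq := isCompact_Icc.prod isCompact_Icc
  have h : (fun p => w p * funint p) =
      Sq.indicator fun p => w p * ((1 - |p.1|) * (1 - |p.2|)) := by
    ext p
    by_cases hp : p ∈ Sq <;> simp [funint, hp]
  rw [h, integrable_indicator_iff hc.measurableSet]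
  exact ContinuousOn.integrableOn_compact hc (by fun_prop)

lemma measurableSet_R1 : MeasurableSet (R1 (π / 4)) := by
  simp only [R1, tan_pi_div_four_region]
  measurability

/-- Fubini on the triangle `0 < y < x ≤ 1`. -/
lemma integral_R1 {g : ℝ × ℝ → ℝ} (hg : Continuous g) :
    ∫ p in R1 (π / 4), g p = ∫ x in (0 : ℝ)..1, ∫ y in (0 : ℝ)..x, g (x, y) := by
  have hsub : R1 (π / 4) ⊆ Ioc (0 : ℝ) 1 ×ˢ Ioc (0 : ℝ) 1 := by
    rintro p ⟨h1, h2, h3, h4⟩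
    rw [tan_pi_div_four_region] at h4
    exact ⟨⟨h1, h2⟩, ⟨h3, by linarith⟩⟩
  have hint : IntegrableOn ((R1 (π / 4)).indicator g) (Ioc (0 : ℝ) 1 ×ˢ Ioc (0 : ℝ) 1) := by
    refine IntegrableOn.indicator ?_ measurableSet_R1
    exact (hg.continuousOn.integrableOn_compact (isCompact_Icc.prod isCompact_Icc)).mono_set
      (prod_mono Ioc_subset_Icc_self Ioc_subset_Icc_self)
  rw [← inter_eq_self_of_subset_right hsub, ← setIntegral_indicator measurableSet_R1,
    Measure.volume_eq_prod, setIntegral_prod _ hint, intervalIntegral.integral_of_le zero_le_one]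
  refine setIntegral_congr_fun measurableSet_Ioc fun x hx => ?_
  have hfib : ∀ y, (R1 (π / 4)).indicator g (x, y) =
      (Ioo 0 x).indicator (fun y => g (x, y)) y := by
    intro y
    simp only [indicator, R1, mem_ofPred_eq, tan_pi_div_four_region, mem_Ioo]
    congr 1
    simp [hx.1, hx.2]
  simp only [hfib]
  rw [setIntegral_indicator measurableSet_Ioo, intervalIntegral.integral_of_le hx.1.le,
    integral_Ioc_eq_integral_Ioo]
  congr 2
  ext y
  simp only [mem_inter_iff, mem_Ioc, mem_Ioo]
  constructor
  · exact fun h => h.2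
  · exact fun h => ⟨⟨h.1, by linarith [h.2, hx.2]⟩, h⟩

lemma integral_R1_funint {w : ℝ × ℝ → ℝ} (hw : Continuous w) :
    ∫ p in R1 (π / 4), w p * funint p =
      ∫ x in (0 : ℝ)..1, ∫ y in (0 : ℝ)..x, w (x, y) * ((1 - x) * (1 - y)) := by
  rw [← integral_R1 (g := fun p => w p * ((1 - p.1) * (1 - p.2))) (by fun_prop)]
  refine setIntegral_congr_fun measurableSet_R1 ?_
  rintro ⟨x, y⟩ ⟨h1, h2, h3, h4⟩
  rw [tan_pi_div_four_region] at h4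
  dsimp only at *
  rw [funint_eq, abs_of_pos h1, abs_of_pos h3]
  · rwa [abs_of_pos h1]
  · rw [abs_of_pos h3]; linarith

lemma integral_quartic (a b c d e x : ℝ) :
    ∫ y in (0 : ℝ)..x, (a + b * y + c * y ^ 2 + d * y ^ 3 + e * y ^ 4) =
      a * x + b * x ^ 2 / 2 + c * x ^ 3 / 3 + d * x ^ 4 / 4 + e * x ^ 5 / 5 := by
  have hd : ∀ y ∈ uIcc 0 x, HasDerivAt
      (fun y : ℝ => a * y + b * y ^ 2 / 2 + c * y ^ 3 / 3 + d * y ^ 4 / 4 + e * y ^ 5 / 5)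
      (a + b * y + c * y ^ 2 + d * y ^ 3 + e * y ^ 4) y := by
    intro y _
    have h := (((((hasDerivAt_id y).const_mul a).add
      (((hasDerivAt_pow 2 y).const_mul b).div_const 2)).add
      (((hasDerivAt_pow 3 y).const_mul c).div_const 3)).add
      (((hasDerivAt_pow 4 y).const_mul d).div_const 4)).add
      (((hasDerivAt_pow 5 y).const_mul e).div_const 5)
    refine HasDerivAt.congr_deriv h ?_
    push_cast
    ring
  rw [intervalIntegral.integral_eq_sub_of_hasDerivAt hd
    (Continuous.intervalIntegrable (by fun_prop) _ _)]
  ring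

lemma mass_R1 : ∫ p in R1 (π / 4), funint p = 1 / 8 := by
  have h := integral_R1_funint (w := fun _ => 1) (by fun_prop)
  simp only [one_mul] at h
  rw [h]
  have h1 : ∀ x : ℝ, ∫ y in (0 : ℝ)..x, (1 - x) * (1 - y) =
      0 + 1 * x + (-3 / 2) * x ^ 2 + (1 / 2) * x ^ 3 + 0 * x ^ 4 := by
    intro x
    trans ∫ y in (0 : ℝ)..x, ((1 - x) + (x - 1) * y + 0 * y ^ 2 + 0 * y ^ 3 + 0 * y ^ 4)
    · congr 1; ext y; ring
    · rw [integral_quartic]; ring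
  simp only [h1]
  rw [integral_quartic]
  norm_num

lemma moment_fst_R1 : ∫ p in R1 (π / 4), p.1 * funint p = 7 / 120 := by
  rw [integral_R1_funint (w := fun p => p.1) (by fun_prop)]
  have h1 : ∀ x : ℝ, ∫ y in (0 : ℝ)..x, x * ((1 - x) * (1 - y)) =
      0 + 0 * x + 1 * x ^ 2 + (-3 / 2) * x ^ 3 + (1 / 2) * x ^ 4 := by
    intro x
    trans ∫ y in (0 : ℝ)..x,
      (x * (1 - x) + x * (x - 1) * y + 0 * y ^ 2 + 0 * y ^ 3 + 0 * y ^ 4)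
    · congr 1; ext y; ring
    · rw [integral_quartic]; ring
  simp only [h1]
  rw [integral_quartic]
  norm_num

lemma moment_snd_R1 : ∫ p in R1 (π / 4), p.2 * funint p = 1 / 40 := by
  rw [integral_R1_funint (w := fun p => p.2) (by fun_prop)]
  have h1 : ∀ x : ℝ, ∫ y in (0 : ℝ)..x, y * ((1 - x) * (1 - y)) =
      0 + 0 * x + (1 / 2) * x ^ 2 + (-5 / 6) * x ^ 3 + (1 / 3) * x ^ 4 := by
    intro x
    trans ∫ y in (0 : ℝ)..x,
      (0 + (1 - x) * y + (x - 1) * y ^ 2 + 0 * y ^ 3 + 0 * y ^ 4)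
    · congr 1; ext y; ring
    · rw [integral_quartic]; ring
  simp only [h1]
  rw [integral_quartic]
  norm_num

/-! ### Symmetries of the square -/

/-- The reflection `(x, y) ↦ (-x, y)`. -/
def negX : ℝ × ℝ ≃ᵐ ℝ × ℝ := (MeasurableEquiv.neg ℝ).prodCongr (MeasurableEquiv.refl ℝ)

/-- The reflection `(x, y) ↦ (y, x)`. -/
def swapXY : ℝ × ℝ ≃ᵐ ℝ × ℝ := MeasurableEquiv.prodComm

lemma negX_apply (p : ℝ × ℝ) : negX p = (-p.1, p.2) := rfl

lemma swapXY_apply (p : ℝ × ℝ) : swapXY p = (p.2, p.1) := rfl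

lemma measurePreserving_negX : MeasurePreserving negX :=
  (Measure.measurePreserving_neg (volume : Measure ℝ)).prod (MeasurePreserving.id volume)

lemma measurePreserving_swapXY : MeasurePreserving swapXY :=
  Measure.measurePreserving_swap

lemma funint_negX (p : ℝ × ℝ) : funint (negX p) = funint p :=
  funint_of_abs (abs_neg _) rfl

lemma funint_swapXY (p : ℝ × ℝ) : funint (swapXY p) = funint p :=
  funint_swap _ _

lemma integral_negX (S : Set (ℝ × ℝ)) (w : ℝ × ℝ → ℝ) :
    ∫ p in negX ⁻¹' S, w (negX p) * funint p = ∫ p in S, w p * funint p := by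
  simpa only [funint_negX] using measurePreserving_negX.setIntegral_preimage_emb
    negX.measurableEmbedding (fun p => w p * funint p) S

lemma integral_swapXY (S : Set (ℝ × ℝ)) (w : ℝ × ℝ → ℝ) :
    ∫ p in swapXY ⁻¹' S, w (swapXY p) * funint p = ∫ p in S, w p * funint p := by
  simpa only [funint_swapXY] using measurePreserving_swapXY.setIntegral_preimage_emb
    swapXY.measurableEmbedding (fun p => w p * funint p) S

lemma R2_eq : R2 (π / 4) = negX ⁻¹' R1 (π / 4) := by
  ext p
  simp only [R1, R2, mem_preimage, negX_apply, mem_ofPred_eq]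
  grind

lemma R5_eq : R5 (π / 4) = swapXY ⁻¹' R1 (π / 4) := by
  ext p
  simp only [R1, R5, mem_preimage, swapXY_apply, mem_ofPred_eq]

lemma R6_eq : R6 (π / 4) = negX ⁻¹' R5 (π / 4) := by
  ext p
  simp only [R6, R5, mem_preimage, negX_apply, mem_ofPred_eq]

lemma R8_eq : R8 (π / 4) = swapXY ⁻¹' R2 (π / 4) := by
  ext p
  simp only [R8, R2, mem_preimage, swapXY_apply, mem_ofPred_eq]

lemma R4_eq : R4 (π / 4) = swapXY ⁻¹' R6 (π / 4) := by
  ext p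
  simp only [R4, R6, mem_preimage, swapXY_apply, mem_ofPred_eq]

lemma R3_eq : R3 (π / 4) = negX ⁻¹' R4 (π / 4) := by
  ext p
  simp only [R4, R3, mem_preimage, negX_apply, mem_ofPred_eq]
  grind

lemma R7_eq : R7 (π / 4) = negX ⁻¹' R8 (π / 4) := by
  ext p
  simp only [R7, R8, mem_preimage, negX_apply, mem_ofPred_eq]

lemma mass_negX (S : Set (ℝ × ℝ)) : ∫ p in negX ⁻¹' S, funint p = ∫ p in S, funint p := by
  simpa using integral_negX S fun _ => 1

lemma mass_swapXY (S : Set (ℝ × ℝ)) : ∫ p in swapXY ⁻¹' S, funint p = ∫ p in S, funint p := by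
  simpa using integral_swapXY S fun _ => 1

lemma fst_negX (S : Set (ℝ × ℝ)) :
    ∫ p in negX ⁻¹' S, p.1 * funint p = -∫ p in S, p.1 * funint p := by
  have h := integral_negX S fun p => p.1
  simp only [negX_apply, neg_mul, integral_neg] at h
  linarith

lemma snd_negX (S : Set (ℝ × ℝ)) :
    ∫ p in negX ⁻¹' S, p.2 * funint p = ∫ p in S, p.2 * funint p :=
  integral_negX S fun p => p.2

lemma fst_swapXY (S : Set (ℝ × ℝ)) :
    ∫ p in swapXY ⁻¹' S, p.1 * funint p = ∫ p in S, p.2 * funint p :=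
  integral_swapXY S fun p => p.2

lemma snd_swapXY (S : Set (ℝ × ℝ)) :
    ∫ p in swapXY ⁻¹' S, p.2 * funint p = ∫ p in S, p.1 * funint p :=
  integral_swapXY S fun p => p.1

/-! ### Masses and first moments of the regions -/

lemma I1_val : I1 funint (π / 4) = 1 / 8 := mass_R1
lemma I2_val : I2 funint (π / 4) = 1 / 8 := by rw [I2, R2_eq, mass_negX, mass_R1]
lemma I5_val : I5 funint (π / 4) = 1 / 8 := by rw [I5, R5_eq, mass_swapXY, mass_R1]
lemma I6_val : I6 funint (π / 4) = 1 / 8 := by rw [I6, R6_eq, mass_negX]; exact I5_val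
lemma I8_val : I8 funint (π / 4) = 1 / 8 := by rw [I8, R8_eq, mass_swapXY]; exact I2_val
lemma I4_val : I4 funint (π / 4) = 1 / 8 := by rw [I4, R4_eq, mass_swapXY]; exact I6_val
lemma I3_val : I3 funint (π / 4) = 1 / 8 := by rw [I3, R3_eq, mass_negX]; exact I4_val
lemma I7_val : I7 funint (π / 4) = 1 / 8 := by rw [I7, R7_eq, mass_negX]; exact I8_val

lemma measurableSet_R5 : MeasurableSet (R5 (π / 4)) :=
  R5_eq ▸ swapXY.measurable measurableSet_R1

lemma measurableSet_R6 : MeasurableSet (R6 (π / 4)) :=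
  R6_eq ▸ negX.measurable measurableSet_R5

lemma measurableSet_R8 : MeasurableSet (R8 (π / 4)) :=
  R8_eq ▸ swapXY.measurable (R2_eq ▸ negX.measurable measurableSet_R1)

lemma measurableSet_R7 : MeasurableSet (R7 (π / 4)) :=
  R7_eq ▸ negX.measurable measurableSet_R8

lemma moment_R6_R7 : ∫ p in R6 (π / 4) ∪ R7 (π / 4), p.1 * funint p = -1 / 20 := by
  have hi := integrable_mul_funint continuous_fst
  rw [setIntegral_union _ measurableSet_R7 hi.integrableOn hi.integrableOn, R7_eq, R6_eq, R8_eq,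
    R5_eq, R2_eq, fst_negX, fst_negX, fst_swapXY, fst_swapXY, snd_negX, moment_snd_R1]
  · norm_num
  · rw [Set.disjoint_left]
    intro p hp hq
    linarith [hp.1, hq.2.1]

lemma moment_R7_R8 : ∫ p in R7 (π / 4) ∪ R8 (π / 4), p.2 * funint p = -7 / 60 := by
  have hi := integrable_mul_funint continuous_snd
  rw [setIntegral_union _ measurableSet_R8 hi.integrableOn hi.integrableOn, R7_eq, R8_eq,
    R2_eq, snd_negX, snd_swapXY, fst_negX, moment_fst_R1]
  · norm_num
  · rw [Set.disjoint_left]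
    intro p hp hq
    linarith [hp.2.2.1, hq.2.2.1]

lemma moment_R5_R6 : ∫ p in R5 (π / 4) ∪ R6 (π / 4), p.2 * funint p = 7 / 60 := by
  have hi := integrable_mul_funint continuous_snd
  rw [setIntegral_union _ measurableSet_R6 hi.integrableOn hi.integrableOn, R6_eq, R5_eq,
    snd_negX, snd_swapXY, moment_fst_R1]
  · norm_num
  · rw [Set.disjoint_left]
    intro p hp hq
    linarith [hp.2.2.1, hq.2.2.1]

/-! ### Masses and first moments of the half squares -/

lemma integral_tent : ∫ y in Icc (-1 : ℝ) 1, (1 - |y|) = 1 := by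
  have hi : ∀ a b : ℝ, IntervalIntegrable (fun y : ℝ => 1 - |y|) volume a b := fun a b =>
    Continuous.intervalIntegrable (by fun_prop) _ _
  rw [integral_Icc_eq_integral_Ioc, ← intervalIntegral.integral_of_le (by norm_num),
    ← intervalIntegral.integral_add_adjacent_intervals (hi (-1) 0) (hi 0 1)]
  have hpos : ∫ y in (0 : ℝ)..1, (1 - |y|) = 1 / 2 := by
    trans ∫ y in (0 : ℝ)..1, (1 + (-1) * y + 0 * y ^ 2 + 0 * y ^ 3 + 0 * y ^ 4)
    · refine intervalIntegral.integral_congr fun y hy => ?_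
      rw [uIcc_of_le zero_le_one] at hy
      simp only [abs_of_nonneg hy.1]
      ring
    · rw [integral_quartic]; norm_num
  have hneg : ∫ y in (-1 : ℝ)..0, (1 - |y|) = 1 / 2 := by
    have h := intervalIntegral.integral_comp_neg (a := 0) (b := 1) fun y : ℝ => 1 - |y|
    simp only [abs_neg, neg_zero] at h
    rw [← h, hpos]
  rw [hpos, hneg]
  norm_num

/-- On the half square `x > 0` the integral factorises, and the `y` factor has mass one. -/
lemma integral_right {w : ℝ → ℝ} :
    ∫ p in {p ∈ Sq | 0 < p.1}, w p.1 * funint p = ∫ x in (0 : ℝ)..1, w x * (1 - x) := by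
  have hset : {p ∈ Sq | 0 < p.1} = Ioc (0 : ℝ) 1 ×ˢ Icc (-1 : ℝ) 1 := by
    ext p
    simp only [Sq, mem_ofPred_eq, mem_prod, mem_Icc, mem_Ioc]
    grind
  rw [hset]
  trans ∫ p in Ioc (0 : ℝ) 1 ×ˢ Icc (-1 : ℝ) 1, (w p.1 * (1 - p.1)) * (1 - |p.2|)
  · refine setIntegral_congr_fun (measurableSet_Ioc.prod measurableSet_Icc) ?_
    rintro ⟨x, y⟩ ⟨hx, hy⟩
    dsimp only at *
    rw [funint_eq (by rw [abs_of_pos hx.1]; exact hx.2) (abs_le.mpr hy), abs_of_pos hx.1]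
    ring
  · rw [Measure.volume_eq_prod, setIntegral_prod_mul (fun x => w x * (1 - x)) fun y => 1 - |y|,
      integral_tent, mul_one, intervalIntegral.integral_of_le zero_le_one]

lemma left_eq : {p ∈ Sq | p.1 < 0} = negX ⁻¹' {p ∈ Sq | 0 < p.1} := by
  ext p
  simp [mem_Sq_iff, negX_apply]

lemma upper_eq : {p ∈ Sq | 0 < p.2} = swapXY ⁻¹' {p ∈ Sq | 0 < p.1} := by
  ext p
  simp [mem_Sq_iff, swapXY_apply, and_comm]

lemma lower_eq : {p ∈ Sq | p.2 < 0} = swapXY ⁻¹' {p ∈ Sq | p.1 < 0} := by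
  ext p
  simp [mem_Sq_iff, swapXY_apply, and_comm]

lemma Q1p_val : Q1p funint = 1 / 2 := by
  have h := integral_right (w := fun _ => 1)
  simp only [one_mul] at h
  rw [Q1p, h]
  trans ∫ y in (0 : ℝ)..1, (1 + (-1) * y + 0 * y ^ 2 + 0 * y ^ 3 + 0 * y ^ 4)
  · congr 1; ext y; ring
  · rw [integral_quartic]; norm_num

lemma XposInt_val : XposInt funint = 1 / 6 := by
  rw [XposInt, integral_right (w := fun x => x)]
  trans ∫ y in (0 : ℝ)..1, (0 + 1 * y + (-1) * y ^ 2 + 0 * y ^ 3 + 0 * y ^ 4)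
  · congr 1; ext y; ring
  · rw [integral_quartic]; norm_num

lemma Q1m_val : Q1m funint = 1 / 2 := by rw [Q1m, left_eq, mass_negX]; exact Q1p_val
lemma Q2p_val : Q2p funint = 1 / 2 := by rw [Q2p, upper_eq, mass_swapXY]; exact Q1p_val
lemma Q2m_val : Q2m funint = 1 / 2 := by rw [Q2m, lower_eq, mass_swapXY]; exact Q1m_val

lemma XnegInt_val : XnegInt funint = -(1 / 6) := by
  rw [XnegInt, left_eq, fst_negX]; exact congrArg _ XposInt_val

lemma YposInt_val : YposInt funint = 1 / 6 := by
  rw [YposInt, upper_eq, snd_swapXY]; exact XposInt_val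

lemma YnegInt_val : YnegInt funint = -(1 / 6) := by
  rw [YnegInt, lower_eq, snd_swapXY]; exact XnegInt_val

/-! ### The equilibrium system and the beneficial trades -/

lemma eqnHolds_of_eq {a : ℝ} (ha : a ≠ 0) : EqnHolds (π / 4) a a := by
  rw [EqnHolds, if_neg ha, div_self ha, arctan_one]

lemma ben1_iff (p : ℝ × ℝ) :
    Ben1 funint 11 (π / 4) (π / 4) (π / 4) (π / 4) p ↔ p.2 < p.1 - 2 / 5 := by
  simp only [Ben1, a1, c1, b1, d1, K1, L1, I6_val, I7_val, I8_val, Q1p_val, Q1m_val, Q2p_val,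
    Q2m_val, XnegInt_val, XposInt_val, YnegInt_val, YposInt_val, moment_R6_R7, moment_R7_R8]
  norm_num
  constructor <;> intro h <;> linarith

lemma ben4_iff (p : ℝ × ℝ) :
    Ben4 funint 11 (π / 4) (π / 4) (π / 4) (π / 4) p ↔ 2 / 5 < p.1 + p.2 := by
  simp only [Ben4, a1, c3, b1, d3, K1, L2, I5_val, I6_val, I7_val, Q1p_val, Q1m_val, Q2p_val,
    Q2m_val, XnegInt_val, XposInt_val, YnegInt_val, YposInt_val, moment_R6_R7, moment_R5_R6]
  norm_num
  constructor <;> intro h <;> linarith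

/-- For the density `(1-|x|)(1-|y|)` on `[-1,1]²` with `n = 11` and the
naive angles `θᵢ = π/4` (which solve the equilibrium system): a type-1 offered trade is
beneficial iff `u2 < u1 - 2/5`, a type-4 offered trade is beneficial iff `u1 + u2 > 2/5`,
and the set of beneficial offered trades has positive Lebesgue measure. -/
theorem uninterested_group_welfare :
    EqSys funint 11 (π / 4) (π / 4) (π / 4) (π / 4) (π / 4) (π / 4) (π / 4) (π / 4) ∧
    (∀ p ∈ R1 (π / 4),
      (Ben1 funint 11 (π / 4) (π / 4) (π / 4) (π / 4) p ↔ p.2 < p.1 - 2 / 5)) ∧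
    (∀ p ∈ R4 (π / 4),
      (Ben4 funint 11 (π / 4) (π / 4) (π / 4) (π / 4) p ↔ 2 / 5 < p.1 + p.2)) ∧
    0 < volume ({p : ℝ × ℝ | p ∈ R1 (π / 4) ∧
        Ben1 funint 11 (π / 4) (π / 4) (π / 4) (π / 4) p} ∪
      {p : ℝ × ℝ | p ∈ R2 (π / 4) ∧ Ben2 funint 11 (π / 4) (π / 4) (π / 4) (π / 4) p} ∪
      {p : ℝ × ℝ | p ∈ R3 (π / 4) ∧ Ben3 funint 11 (π / 4) (π / 4) (π / 4) (π / 4) p} ∪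
      {p : ℝ × ℝ | p ∈ R4 (π / 4) ∧ Ben4 funint 11 (π / 4) (π / 4) (π / 4) (π / 4) p}) := by
  refine ⟨?_, fun p _ => ben1_iff p, fun p _ => ben4_iff p, ?_⟩
  · simp only [EqSys, K1, K2, L1, L2, I1_val, I2_val, I3_val, I4_val, I5_val, I6_val, I7_val,
      I8_val, Q1p_val, Q1m_val, Q2p_val, Q2m_val]
    norm_num
    exact eqnHolds_of_eq (by norm_num)
  · have hopen : IsOpen (Ioo (4 / 5 : ℝ) 1 ×ˢ Ioo (0 : ℝ) (1 / 5)) := isOpen_Ioo.prod isOpen_Ioo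
    refine (hopen.measure_pos volume ⟨(9 / 10, 1 / 10), by norm_num, by norm_num⟩).trans_le
      (measure_mono fun p hp => ?_)
    obtain ⟨⟨h1, h2⟩, h3, h4⟩ := hp
    refine Or.inl (Or.inl (Or.inl ⟨⟨by linarith, h2.le, h3, ?_⟩, (ben1_iff p).mpr (by linarith)⟩))
    rw [tan_pi_div_four_region]
    linarith
end
end

section
/- Suppose the density f is point symmetric around the origin, i.e. f(x,y) = f(-x,-y) for all (x,y) ∈ [-1,1]², and set θ1 = ⋯ = θ8 = π/4. Then (I6+I7)·(I1+I4) = (I5+I8)·(I2+I3) and (I3+I4)·(I5+I6) = (I1+I2)·(I7+I8) at these angles, so that the group-wide trading probabilities satisfy 𝒬1p = Q1p = 1/2, 𝒬1m = Q1m = 1/2, 𝒬2p = Q2p = 1/2, 𝒬2m = Q2m = 1/2; consequently the naive angles θi = π/4 also solve the modified equilibrium system in which Q1p, Q1m, Q2p, Q2m are replaced by 𝒬1p, 𝒬1m, 𝒬2p, 𝒬2m (the group-wide trading model yields the same naive equilibrium as the myopic model). -/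
/-!
A point-symmetric density is invariant under `p ↦ -p` (outside the square both values are `0`), and
so is Lebesgue measure; hence regions that are antipodal to each other carry the same mass
(`setIntegral_antipodal`). This gives `I1 = I3`, `I2 = I4`, `I5 = I7`, `I6 = I8` at a common angle.
Consequently all four sums `I1 + I2`, `I1 + I4`, `I2 + I3`, `I3 + I4` coincide, and so do the four
sums `I5 + I6`, `I5 + I8`, `I6 + I7`, `I7 + I8`, so the correction terms in the group-wide
probabilities cancel.

Antipodal half squares also have equal mass, and they fill the square up to a segment of measure
zero, so each has mass `1/2`. Therefore the modified `K1, K2, L1, L2` are all equal, and in each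
equation the numerator equals the denominator: the equation reads `π/4 = arctan 1`, or is vacuous
when both vanish.
-/

open MeasureTheory Real Set

noncomputable section

/-- The probability that a random voter ends up voting in favour of `t₁` in the
group-wide trading model. -/
def cQ1p (f : ℝ × ℝ → ℝ) (n : ℕ) (θ1 θ2 θ3 θ4 θ5 θ6 θ7 θ8 : ℝ) : ℝ :=
  Q1p f + ((n : ℝ) - 3) / ((n : ℝ) - 2) *
    ((I6 f θ6 + I7 f θ7) * (I1 f θ1 + I4 f θ4) - (I5 f θ5 + I8 f θ8) * (I2 f θ2 + I3 f θ3))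

def cQ1m (f : ℝ × ℝ → ℝ) (n : ℕ) (θ1 θ2 θ3 θ4 θ5 θ6 θ7 θ8 : ℝ) : ℝ :=
  Q1m f + ((n : ℝ) - 3) / ((n : ℝ) - 2) *
    ((I5 f θ5 + I8 f θ8) * (I2 f θ2 + I3 f θ3) - (I6 f θ6 + I7 f θ7) * (I1 f θ1 + I4 f θ4))

def cQ2p (f : ℝ × ℝ → ℝ) (n : ℕ) (θ1 θ2 θ3 θ4 θ5 θ6 θ7 θ8 : ℝ) : ℝ :=
  Q2p f + ((n : ℝ) - 3) / ((n : ℝ) - 2) *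
    ((I3 f θ3 + I4 f θ4) * (I5 f θ5 + I6 f θ6) - (I1 f θ1 + I2 f θ2) * (I7 f θ7 + I8 f θ8))

def cQ2m (f : ℝ × ℝ → ℝ) (n : ℕ) (θ1 θ2 θ3 θ4 θ5 θ6 θ7 θ8 : ℝ) : ℝ :=
  Q2m f + ((n : ℝ) - 3) / ((n : ℝ) - 2) *
    ((I1 f θ1 + I2 f θ2) * (I7 f θ7 + I8 f θ8) - (I3 f θ3 + I4 f θ4) * (I5 f θ5 + I6 f θ6))

def mK1 (f : ℝ × ℝ → ℝ) (n : ℕ) (θ1 θ2 θ3 θ4 θ5 θ6 θ7 θ8 : ℝ) : ℝ :=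
  cQ1m f n θ1 θ2 θ3 θ4 θ5 θ6 θ7 θ8 ^ ((n - 1) / 2) *
    cQ1p f n θ1 θ2 θ3 θ4 θ5 θ6 θ7 θ8 ^ ((n - 3) / 2)

def mK2 (f : ℝ × ℝ → ℝ) (n : ℕ) (θ1 θ2 θ3 θ4 θ5 θ6 θ7 θ8 : ℝ) : ℝ :=
  cQ1m f n θ1 θ2 θ3 θ4 θ5 θ6 θ7 θ8 ^ ((n - 3) / 2) *
    cQ1p f n θ1 θ2 θ3 θ4 θ5 θ6 θ7 θ8 ^ ((n - 1) / 2)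

def mL1 (f : ℝ × ℝ → ℝ) (n : ℕ) (θ1 θ2 θ3 θ4 θ5 θ6 θ7 θ8 : ℝ) : ℝ :=
  cQ2m f n θ1 θ2 θ3 θ4 θ5 θ6 θ7 θ8 ^ ((n - 3) / 2) *
    cQ2p f n θ1 θ2 θ3 θ4 θ5 θ6 θ7 θ8 ^ ((n - 1) / 2)

def mL2 (f : ℝ × ℝ → ℝ) (n : ℕ) (θ1 θ2 θ3 θ4 θ5 θ6 θ7 θ8 : ℝ) : ℝ :=
  cQ2m f n θ1 θ2 θ3 θ4 θ5 θ6 θ7 θ8 ^ ((n - 1) / 2) *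
    cQ2p f n θ1 θ2 θ3 θ4 θ5 θ6 θ7 θ8 ^ ((n - 3) / 2)

/-- The modified equilibrium system of the group-wide trading model, in which
`Q1p, Q1m, Q2p, Q2m` are replaced by `𝒬1p, 𝒬1m, 𝒬2p, 𝒬2m`. -/
def EqSysMod (f : ℝ × ℝ → ℝ) (n : ℕ) (θ1 θ2 θ3 θ4 θ5 θ6 θ7 θ8 : ℝ) : Prop :=
  EqnHolds θ1 ((I6 f θ6 + I7 f θ7) * mK1 f n θ1 θ2 θ3 θ4 θ5 θ6 θ7 θ8)
    ((I7 f θ7 + I8 f θ8) * mL1 f n θ1 θ2 θ3 θ4 θ5 θ6 θ7 θ8) ∧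
  EqnHolds θ2 ((I5 f θ5 + I8 f θ8) * mK2 f n θ1 θ2 θ3 θ4 θ5 θ6 θ7 θ8)
    ((I7 f θ7 + I8 f θ8) * mL1 f n θ1 θ2 θ3 θ4 θ5 θ6 θ7 θ8) ∧
  EqnHolds θ3 ((I5 f θ5 + I8 f θ8) * mK2 f n θ1 θ2 θ3 θ4 θ5 θ6 θ7 θ8)
    ((I5 f θ5 + I6 f θ6) * mL2 f n θ1 θ2 θ3 θ4 θ5 θ6 θ7 θ8) ∧
  EqnHolds θ4 ((I6 f θ6 + I7 f θ7) * mK1 f n θ1 θ2 θ3 θ4 θ5 θ6 θ7 θ8)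
    ((I5 f θ5 + I6 f θ6) * mL2 f n θ1 θ2 θ3 θ4 θ5 θ6 θ7 θ8) ∧
  EqnHolds θ5 ((I3 f θ3 + I4 f θ4) * mL2 f n θ1 θ2 θ3 θ4 θ5 θ6 θ7 θ8)
    ((I2 f θ2 + I3 f θ3) * mK2 f n θ1 θ2 θ3 θ4 θ5 θ6 θ7 θ8) ∧
  EqnHolds θ6 ((I3 f θ3 + I4 f θ4) * mL2 f n θ1 θ2 θ3 θ4 θ5 θ6 θ7 θ8)
    ((I1 f θ1 + I4 f θ4) * mK1 f n θ1 θ2 θ3 θ4 θ5 θ6 θ7 θ8) ∧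
  EqnHolds θ7 ((I1 f θ1 + I2 f θ2) * mL1 f n θ1 θ2 θ3 θ4 θ5 θ6 θ7 θ8)
    ((I1 f θ1 + I4 f θ4) * mK1 f n θ1 θ2 θ3 θ4 θ5 θ6 θ7 θ8) ∧
  EqnHolds θ8 ((I1 f θ1 + I2 f θ2) * mL1 f n θ1 θ2 θ3 θ4 θ5 θ6 θ7 θ8)
    ((I2 f θ2 + I3 f θ3) * mK2 f n θ1 θ2 θ3 θ4 θ5 θ6 θ7 θ8)

/-- Sets exchanged by `p ↦ -p` have the same mass under a point-symmetric function. -/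
lemma setIntegral_antipodal {f : ℝ × ℝ → ℝ} (hs : ∀ p, f (-p) = f p) {S T : Set (ℝ × ℝ)}
    (h : ∀ p, p ∈ S ↔ -p ∈ T) : ∫ p in S, f p = ∫ p in T, f p := by
  have hST : S = (fun p : ℝ × ℝ => -p) ⁻¹' T := Set.ext h
  have hmp : MeasurePreserving (fun p : ℝ × ℝ => -p) volume volume :=
    Measure.measurePreserving_neg _
  have := hmp.setIntegral_preimage_emb (MeasurableEquiv.neg (ℝ × ℝ)).measurableEmbedding f T
  rw [hST, ← this]
  simp only [hs]

lemma IsNiceDensity.neg_eq {f : ℝ × ℝ → ℝ} (hf : IsNiceDensity f)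
    (hsym : ∀ p ∈ Sq, f p = f (-p.1, -p.2)) (p : ℝ × ℝ) : f (-p) = f p := by
  by_cases hp : p ∈ Sq
  · exact (hsym p hp).symm
  · have hn : -p ∉ Sq := by
      contrapose! hp
      simp only [Sq, mem_prod, mem_Icc, Prod.fst_neg, Prod.snd_neg] at hp ⊢
      grind
    rw [hf.vanish p hp, hf.vanish _ hn]

/-- The positive and negative parts of the square with respect to a measurable function `g` with
null zero set together have mass `1`. -/
lemma IsNiceDensity.halves_add {f : ℝ × ℝ → ℝ} (hf : IsNiceDensity f) {g : ℝ × ℝ → ℝ}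
    (hg : Measurable g) (h0 : volume {p | g p = 0} = 0) :
    (∫ p in {p ∈ Sq | 0 < g p}, f p) + ∫ p in {p ∈ Sq | g p < 0}, f p = 1 := by
  -- A non-integrable function would have integral `0`, not `1`.
  have hi : IntegrableOn f Sq := by
    by_contra h
    have := hf.total
    rw [integral_undef h] at this
    exact zero_ne_one this
  have hSq : MeasurableSet Sq := measurableSet_Icc.prod measurableSet_Icc
  have hm : MeasurableSet {p ∈ Sq | g p < 0} := hSq.inter (measurableSet_lt hg measurable_const)
  rw [← setIntegral_union _ hm (hi.mono_set (sep_subset _ _)) (hi.mono_set (sep_subset _ _)),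
    ← hf.total]
  · apply setIntegral_congr_set
    have hne : ∀ᵐ p : ℝ × ℝ, g p ≠ 0 := by simpa [ae_iff] using h0
    filter_upwards [hne] with p hp
    apply propext
    change (p ∈ Sq ∧ 0 < g p) ∨ (p ∈ Sq ∧ g p < 0) ↔ p ∈ Sq
    have := lt_or_gt_of_ne hp
    tauto
  · rw [Set.disjoint_left]
    rintro p ⟨-, h1⟩ ⟨-, h2⟩
    exact lt_asymm h1 h2

lemma volume_fst_eq_zero : volume {p : ℝ × ℝ | p.1 = 0} = 0 := by
  have : {p : ℝ × ℝ | p.1 = 0} = {0} ×ˢ univ := by ext; simp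
  rw [this, Measure.volume_eq_prod, Measure.prod_prod]
  simp

lemma volume_snd_eq_zero : volume {p : ℝ × ℝ | p.2 = 0} = 0 := by
  have : {p : ℝ × ℝ | p.2 = 0} = univ ×ˢ {0} := by ext; simp
  rw [this, Measure.volume_eq_prod, Measure.prod_prod]
  simp

/-- If numerator and denominator agree, the naive angle solves the equation, since
`arctan 1 = π/4`; when both are zero there is no constraint. -/
lemma eqnHolds_pi_div_four {a b : ℝ} (h : a = b) : EqnHolds (π / 4) a b := by
  unfold EqnHolds
  split_ifs with hb
  · exact Or.inl (h.trans hb)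
  · rw [h, div_self hb, arctan_one]

/-- For a point-symmetric density `f` and the naive angles `θᵢ = π/4`:
`(I6+I7)(I1+I4) = (I5+I8)(I2+I3)` and `(I3+I4)(I5+I6) = (I1+I2)(I7+I8)`, so
`𝒬1p = Q1p = 1/2`, `𝒬1m = Q1m = 1/2`, `𝒬2p = Q2p = 1/2`, `𝒬2m = Q2m = 1/2`;
consequently the naive angles also solve the modified equilibrium system of the
group-wide trading model. -/
theorem groupwide_naive_equilibrium_of_symmetric (n : ℕ) (hodd : Odd n) (hn : 5 ≤ n)
    (f : ℝ × ℝ → ℝ) (hf : IsNiceDensity f)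
    (hsym : ∀ p ∈ Sq, f p = f (-p.1, -p.2)) :
    (I6 f (π / 4) + I7 f (π / 4)) * (I1 f (π / 4) + I4 f (π / 4)) =
      (I5 f (π / 4) + I8 f (π / 4)) * (I2 f (π / 4) + I3 f (π / 4)) ∧
    (I3 f (π / 4) + I4 f (π / 4)) * (I5 f (π / 4) + I6 f (π / 4)) =
      (I1 f (π / 4) + I2 f (π / 4)) * (I7 f (π / 4) + I8 f (π / 4)) ∧
    cQ1p f n (π / 4) (π / 4) (π / 4) (π / 4) (π / 4) (π / 4) (π / 4) (π / 4) = Q1p f ∧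
    Q1p f = 1 / 2 ∧
    cQ1m f n (π / 4) (π / 4) (π / 4) (π / 4) (π / 4) (π / 4) (π / 4) (π / 4) = Q1m f ∧
    Q1m f = 1 / 2 ∧
    cQ2p f n (π / 4) (π / 4) (π / 4) (π / 4) (π / 4) (π / 4) (π / 4) (π / 4) = Q2p f ∧
    Q2p f = 1 / 2 ∧
    cQ2m f n (π / 4) (π / 4) (π / 4) (π / 4) (π / 4) (π / 4) (π / 4) (π / 4) = Q2m f ∧
    Q2m f = 1 / 2 ∧
    EqSysMod f n (π / 4) (π / 4) (π / 4) (π / 4) (π / 4) (π / 4) (π / 4) (π / 4) := by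
  have hs := hf.neg_eq hsym
  have e13 : I1 f (π / 4) = I3 f (π / 4) := setIntegral_antipodal hs fun p => by
    simp only [R1, R3, mem_ofPred_eq, Prod.fst_neg, Prod.snd_neg, neg_neg]; grind
  have e24 : I2 f (π / 4) = I4 f (π / 4) := setIntegral_antipodal hs fun p => by
    simp only [R2, R4, mem_ofPred_eq, Prod.fst_neg, Prod.snd_neg, neg_neg]; grind
  have e57 : I5 f (π / 4) = I7 f (π / 4) := setIntegral_antipodal hs fun p => by
    simp only [R5, R7, mem_ofPred_eq, Prod.fst_neg, Prod.snd_neg, neg_neg]; grind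
  have e68 : I6 f (π / 4) = I8 f (π / 4) := setIntegral_antipodal hs fun p => by
    simp only [R6, R8, mem_ofPred_eq, Prod.fst_neg, Prod.snd_neg, neg_neg]; grind
  have q1 : Q1p f = Q1m f := setIntegral_antipodal hs fun p => by
    simp only [Sq, mem_ofPred_eq, mem_prod, mem_Icc, Prod.fst_neg, Prod.snd_neg]; grind
  have q2 : Q2p f = Q2m f := setIntegral_antipodal hs fun p => by
    simp only [Sq, mem_ofPred_eq, mem_prod, mem_Icc, Prod.fst_neg, Prod.snd_neg]; grind
  have s1 : Q1p f + Q1m f = 1 := hf.halves_add measurable_fst volume_fst_eq_zero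
  have s2 : Q2p f + Q2m f = 1 := hf.halves_add measurable_snd volume_snd_eq_zero
  have h1p : Q1p f = 1 / 2 := by linarith
  have h1m : Q1m f = 1 / 2 := by linarith
  have h2p : Q2p f = 1 / 2 := by linarith
  have h2m : Q2m f = 1 / 2 := by linarith
  have c1p : cQ1p f n (π / 4) (π / 4) (π / 4) (π / 4) (π / 4) (π / 4) (π / 4) (π / 4) = Q1p f := by
    rw [cQ1p, e13, e24, e57, e68]; ring
  have c1m : cQ1m f n (π / 4) (π / 4) (π / 4) (π / 4) (π / 4) (π / 4) (π / 4) (π / 4) = Q1m f := by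
    rw [cQ1m, e13, e24, e57, e68]; ring
  have c2p : cQ2p f n (π / 4) (π / 4) (π / 4) (π / 4) (π / 4) (π / 4) (π / 4) (π / 4) = Q2p f := by
    rw [cQ2p, e13, e24, e57, e68]; ring
  have c2m : cQ2m f n (π / 4) (π / 4) (π / 4) (π / 4) (π / 4) (π / 4) (π / 4) (π / 4) = Q2m f := by
    rw [cQ2m, e13, e24, e57, e68]; ring
  refine ⟨?_, ?_, c1p, h1p, c1m, h1m, c2p, h2p, c2m, h2m, ?_⟩
  · rw [e13, e24, e57, e68]; ring
  · rw [e13, e24, e57, e68]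
  · refine ⟨?_, ?_, ?_, ?_, ?_, ?_, ?_, ?_⟩ <;>
    · apply eqnHolds_pi_div_four
      simp only [mK1, mK2, mL1, mL2, c1p, c1m, c2p, c2m, h1p, h1m, h2p, h2m, e13, e24, e57, e68] <;>
        ring
end
end
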